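/- arXiv:2005.05609 — 4 statements merged into one kernel-verified Lean document; each statement's English description precedes it below -/
import Mathlib

section
/- Let x₁, x₂ ∈ L¹([a,b],ℝⁿ). If ∫_a^b ( x₁(s)·η(s) + x₂(s)·η'(s) ) ds = 0 for every infinitely differentiable function η : [a,b] → ℝⁿ whose support is a compact subset of the open interval (a,b), then there exists a constant y ∈ ℝⁿ such that x₂(t) = y + ∫_a^t x₁(s) ds for almost every t ∈ [a,b]; in particular x₂ has an absolutely continuous representative whose derivative equals x₁ almost everywhere on [a,b]. -/
open MeasureTheory Set
open scoped RealInnerProductSpace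

/-!
For a primitive `F` of `x₁`, integration by parts turns the hypothesis into `∫ φ' • (x₂ - F) = 0`
for all test functions `φ`. A test function is the derivative of a test function exactly when its
integral vanishes. Subtracting a multiple of a fixed test function `ψ` of integral one makes the
integral of any test function `g` vanish, so `∫ g • (x₂ - F) = (∫ g) • ∫ ψ • (x₂ - F)`,
i.e. `x₂ - F` is almost everywhere equal to the constant `∫ ψ • (x₂ - F)`.
-/

section TestFunctions

open Function

open scoped ContDiff

lemma exists_contDiff_tsupport_subset_integral_eq_one {V : Type*} [NormedAddCommGroup V]
    [NormedSpace ℝ V] [FiniteDimensional ℝ V] [MeasurableSpace V] [BorelSpace V] (μ : Measure V)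
    [IsLocallyFiniteMeasure μ] [μ.IsOpenPosMeasure] {s : Set V} {x : V} (hs : s ∈ nhds x) :
    ∃ ψ : V → ℝ, ContDiff ℝ ∞ ψ ∧ tsupport ψ ⊆ s ∧ ∫ y, ψ y ∂μ = 1 := by
  obtain ⟨r, hr, hrs⟩ := Metric.nhds_basis_closedBall.mem_iff.1 hs
  let f : ContDiffBump x := ⟨r / 2, r, half_pos hr, half_lt_self hr⟩
  exact ⟨f.normed μ, f.contDiff_normed, f.tsupport_normed_eq.trans_subset hrs,
    f.integral_normed⟩

lemma exists_subset_Icc_of_isCompact_subset_Ioo {α : Type*} [LinearOrder α] [TopologicalSpace α]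
    [OrderClosedTopology α] {a b : α} (hab : a < b) {K : Set α} (hK : IsCompact K)
    (hKab : K ⊆ Ioo a b) : ∃ c d, a < c ∧ d < b ∧ K ⊆ Icc c d := by
  rcases K.eq_empty_or_nonempty with rfl | hne
  · exact ⟨b, a, hab, hab, empty_subset _⟩
  · obtain ⟨c, hcK, hc⟩ := hK.exists_isLeast hne
    obtain ⟨d, hdK, hd⟩ := hK.exists_isGreatest hne
    exact ⟨c, d, (hKab hcK).1, (hKab hdK).2, fun x hx => ⟨hc hx, hd hx⟩⟩

lemma isCompact_tsupport_of_subset_Ioo {α β : Type*} [Preorder α] [TopologicalSpace α]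
    [CompactIccSpace α] [Zero β] {f : α → β} {a b : α} (hf : tsupport f ⊆ Ioo a b) :
    IsCompact (tsupport f) :=
  isCompact_Icc.of_isClosed_subset (isClosed_tsupport f) (hf.trans Ioo_subset_Icc_self)

variable {E : Type*} [NormedAddCommGroup E] [NormedSpace ℝ E]

lemma support_intervalIntegral_subset_Icc {g : ℝ → E} {a c d : ℝ} (hac : a < c)
    (hg : support g ⊆ Icc c d) (hg₀ : ∫ s, g s = 0) :
    support (fun t => ∫ s in a..t, g s) ⊆ Icc c d := by
  intro t ht
  by_contra htcd
  refine ht ?_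
  rcases lt_or_ge t c with htc | hct
  · refine intervalIntegral.integral_zero_ae (.of_forall fun s hs => ?_)
    exact notMem_support.1 fun hgs => (hs.2.trans_lt (max_lt hac htc)).not_ge (hg hgs).1
  · have hdt : d < t := not_le.1 fun htd => htcd ⟨hct, htd⟩
    have hgt : support g ⊆ Ioc a t :=
      hg.trans fun s hs => ⟨hac.trans_le hs.1, hs.2.trans hdt.le⟩
    exact (intervalIntegral.integral_eq_integral_of_support_subset hgt).trans hg₀

lemma tsupport_intervalIntegral_subset_Ioo {g : ℝ → E} {a b : ℝ} (hab : a < b)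
    (hg : tsupport g ⊆ Ioo a b) (hg₀ : ∫ s, g s = 0) :
    tsupport (fun t => ∫ s in a..t, g s) ⊆ Ioo a b := by
  obtain ⟨c, d, hac, hdb, hgcd⟩ :=
    exists_subset_Icc_of_isCompact_subset_Ioo hab (isCompact_tsupport_of_subset_Ioo hg) hg
  have hsupport := support_intervalIntegral_subset_Icc hac ((subset_tsupport g).trans hgcd) hg₀
  exact (closure_minimal hsupport isClosed_Icc).trans (Icc_subset_Ioo hac hdb)

lemma contDiff_infty_intervalIntegral [CompleteSpace E] {g : ℝ → E} (hg : ContDiff ℝ ∞ g)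
    (a : ℝ) : ContDiff ℝ ∞ (fun t => ∫ s in a..t, g s) := by
  have hderiv : deriv (fun t => ∫ s in a..t, g s) = g :=
    funext (hg.continuous.deriv_integral g a)
  refine contDiff_infty_iff_deriv.2 ⟨fun t => ?_, hderiv.symm ▸ hg⟩
  exact (hg.continuous.integral_hasStrictDerivAt a t).hasDerivAt.differentiableAt

lemma exists_contDiff_tsupport_subset_Ioo_deriv_eq [CompleteSpace E] {g : ℝ → E} {a b : ℝ}
    (hab : a < b) (hg : ContDiff ℝ ∞ g) (hgs : tsupport g ⊆ Ioo a b) (hg₀ : ∫ s, g s = 0) :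
    ∃ φ : ℝ → E, ContDiff ℝ ∞ φ ∧ tsupport φ ⊆ Ioo a b ∧ deriv φ = g :=
  ⟨fun t => ∫ s in a..t, g s, contDiff_infty_intervalIntegral hg a,
    tsupport_intervalIntegral_subset_Ioo hab hgs hg₀,
    funext (hg.continuous.deriv_integral g a)⟩

lemma integrable_smul_of_locallyIntegrableOn {X : Type*} [TopologicalSpace X] [MeasurableSpace X]
    [OpensMeasurableSpace X] [T2Space X] {μ : Measure X} {U : Set X} {w : X → E}
    (hw : LocallyIntegrableOn w U μ) {g : X → ℝ} (hg : Continuous g)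
    (hgc : HasCompactSupport g) (hgU : tsupport g ⊆ U) :
    Integrable (fun x => g x • w x) μ := by
  have hint : IntegrableOn (fun x => g x • w x) (tsupport g) μ :=
    (hw.integrableOn_compact_subset hgU hgc).continuousOn_smul hg.continuousOn hgc
  refine (integrableOn_iff_integrable_of_support_subset ?_).1 hint
  exact (support_smul_subset_left g w).trans (subset_tsupport g)

lemma intervalIntegral_smul_eq_integral_of_tsupport_subset_Ioo {φ : ℝ → ℝ} {a b : ℝ}
    (hφ : tsupport φ ⊆ Ioo a b) (f : ℝ → E) : ∫ t in a..b, φ t • f t = ∫ t, φ t • f t :=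
  intervalIntegral.integral_eq_integral_of_support_subset <|
    (support_smul_subset_left φ f).trans <|
      (subset_tsupport φ).trans <| hφ.trans Ioo_subset_Ioc_self

end TestFunctions

section IntegrationByParts

variable {E : Type*} [NormedAddCommGroup E] [NormedSpace ℝ E] {a b : ℝ}

lemma integral_deriv_mul_intervalIntegral {f φ : ℝ → ℝ} (hf : IntervalIntegrable f volume a b)
    (hφ : AbsolutelyContinuousOnInterval φ a b) :
    ∫ t in a..b, deriv φ t * ∫ s in a..t, f s
      = φ b * (∫ s in a..b, f s) - ∫ t in a..b, φ t * f t := by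
  have hF : AbsolutelyContinuousOnInterval (fun t => ∫ s in a..t, f s) a b :=
    hf.absolutelyContinuousOnInterval_intervalIntegral left_mem_uIcc
  have hF' : ∫ t in a..b, φ t * deriv (fun t => ∫ s in a..t, f s) t
      = ∫ t in a..b, φ t * f t := by
    refine intervalIntegral.integral_congr_ae ?_
    filter_upwards [hf.ae_hasDerivAt_integral] with t ht hmem
    rw [(ht (uIoc_subset_uIcc hmem) a left_mem_uIcc).deriv]
  have hparts := hφ.integral_mul_deriv_eq_deriv_mul hF
  rw [hF', intervalIntegral.integral_same, mul_zero, sub_zero] at hparts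
  rw [hparts, sub_sub_cancel]

theorem integral_deriv_smul_intervalIntegral [CompleteSpace E] {f : ℝ → E} {φ : ℝ → ℝ}
    (hf : IntervalIntegrable f volume a b) (hφ : AbsolutelyContinuousOnInterval φ a b) :
    ∫ t in a..b, deriv φ t • ∫ s in a..t, f s
      = φ b • (∫ s in a..b, f s) - ∫ t in a..b, φ t • f t := by
  have hF : ContinuousOn (fun t => ∫ s in a..t, f s) (uIcc a b) :=
    intervalIntegral.continuousOn_primitive_interval' hf left_mem_uIcc
  refine (SeparatingDual.eq_iff_forall_dual_eq (R := ℝ)).2 fun ℓ => ?_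
  have hℓF {t : ℝ} (ht : t ∈ uIcc a b) : ℓ (∫ s in a..t, f s) = ∫ s in a..t, ℓ (f s) :=
    (ℓ.intervalIntegral_comp_comm (hf.mono_set (uIcc_subset_uIcc_left ht))).symm
  calc ℓ (∫ t in a..b, deriv φ t • ∫ s in a..t, f s)
      = ∫ t in a..b, deriv φ t * ∫ s in a..t, ℓ (f s) := by
        rw [← ℓ.intervalIntegral_comp_comm (hφ.intervalIntegrable_deriv.smul_continuousOn hF)]
        refine intervalIntegral.integral_congr fun t ht => ?_
        simp only [map_smul, hℓF ht, smul_eq_mul]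
    _ = φ b * (∫ s in a..b, ℓ (f s)) - ∫ t in a..b, φ t * ℓ (f t) :=
        integral_deriv_mul_intervalIntegral ⟨ℓ.integrable_comp hf.1, ℓ.integrable_comp hf.2⟩ hφ
    _ = ℓ (φ b • (∫ s in a..b, f s) - ∫ t in a..b, φ t • f t) := by
        rw [map_sub, map_smul, hℓF right_mem_uIcc,
          ← ℓ.intervalIntegral_comp_comm (hf.continuousOn_smul hφ.continuousOn)]
        simp only [map_smul, smul_eq_mul]

end IntegrationByParts

section WeakDerivative

open scoped ContDiff

variable {E : Type*} [NormedAddCommGroup E] [NormedSpace ℝ E]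

/-- `w'` is a weak derivative of `w` on the open set `U ⊆ ℝ`. Both functions are locally integrable
on `U`, and the test functions are scalar-valued, so that no inner product on `E` is needed; the
integrals extend over `ℝ`, as the test functions vanish outside `U`. -/
structure HasWeakDerivOn (w w' : ℝ → E) (U : Set ℝ) : Prop where
  locallyIntegrableOn : LocallyIntegrableOn w U
  locallyIntegrableOn_deriv : LocallyIntegrableOn w' U
  integral_deriv_smul : ∀ φ : ℝ → ℝ, ContDiff ℝ ∞ φ → HasCompactSupport φ → tsupport φ ⊆ U →
    ∫ t, deriv φ t • w t = -∫ t, φ t • w' t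

lemma HasWeakDerivOn.sub {w₁ w₁' w₂ w₂' : ℝ → E} {U : Set ℝ} (h₁ : HasWeakDerivOn w₁ w₁' U)
    (h₂ : HasWeakDerivOn w₂ w₂' U) : HasWeakDerivOn (w₁ - w₂) (w₁' - w₂') U where
  locallyIntegrableOn := h₁.locallyIntegrableOn.sub h₂.locallyIntegrableOn
  locallyIntegrableOn_deriv := h₁.locallyIntegrableOn_deriv.sub h₂.locallyIntegrableOn_deriv
  integral_deriv_smul φ hφ hφc hφU := by
    have hint {w : ℝ → E} (hw : LocallyIntegrableOn w U) : Integrable (fun t => φ t • w t) :=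
      integrable_smul_of_locallyIntegrableOn hw hφ.continuous hφc hφU
    have hint' {w : ℝ → E} (hw : LocallyIntegrableOn w U) :
        Integrable (fun t => deriv φ t • w t) :=
      integrable_smul_of_locallyIntegrableOn hw (hφ.continuous_deriv (by simp)) hφc.deriv
        (tsupport_deriv_subset.trans hφU)
    simp only [Pi.sub_apply, smul_sub]
    rw [integral_sub (hint' h₁.1) (hint' h₂.1), integral_sub (hint h₁.2) (hint h₂.2),
      h₁.integral_deriv_smul φ hφ hφc hφU, h₂.integral_deriv_smul φ hφ hφc hφU]
    abel

variable {a b : ℝ}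

lemma HasWeakDerivOn.integral_smul_eq_of_deriv_zero {w : ℝ → E} (hab : a < b)
    (hw : HasWeakDerivOn w 0 (Ioo a b)) {g ψ : ℝ → ℝ} (hg : ContDiff ℝ ∞ g)
    (hgs : tsupport g ⊆ Ioo a b) (hψ : ContDiff ℝ ∞ ψ) (hψs : tsupport ψ ⊆ Ioo a b)
    (hψ₁ : ∫ t, ψ t = 1) : ∫ t, g t • w t = (∫ t, g t) • ∫ t, ψ t • w t := by
  set m := ∫ t, g t
  have hgc : HasCompactSupport g := isCompact_tsupport_of_subset_Ioo hgs
  have hψc : HasCompactSupport ψ := isCompact_tsupport_of_subset_Ioo hψs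
  have hgw : Integrable (fun t => g t • w t) :=
    integrable_smul_of_locallyIntegrableOn hw.locallyIntegrableOn hg.continuous hgc hgs
  have hψw : Integrable (fun t => ψ t • w t) :=
    integrable_smul_of_locallyIntegrableOn hw.locallyIntegrableOn hψ.continuous hψc hψs
  have hsupport : tsupport (fun t => g t - m * ψ t) ⊆ Ioo a b :=
    (tsupport_sub g fun t => m * ψ t).trans
      (union_subset hgs ((tsupport_mul_subset_right (f := fun _ => m)).trans hψs))
  have hzero : ∫ t, (g t - m * ψ t) = 0 := by
    rw [integral_sub (hg.continuous.integrable_of_hasCompactSupport hgc)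
      ((hψ.continuous.integrable_of_hasCompactSupport hψc).const_mul m),
      integral_const_mul, hψ₁, mul_one, sub_self]
  obtain ⟨φ, hφ, hφs, hφ'⟩ := exists_contDiff_tsupport_subset_Ioo_deriv_eq hab
    (hg.sub (contDiff_const.mul hψ)) hsupport hzero
  refine sub_eq_zero.1 ?_
  calc (∫ t, g t • w t) - m • ∫ t, ψ t • w t
      = ∫ t, deriv φ t • w t := by
        simp only [hφ', sub_smul, mul_smul]
        rw [integral_sub hgw (hψw.fun_smul m), integral_smul]
    _ = 0 := by
        simpa using hw.integral_deriv_smul φ hφ (isCompact_tsupport_of_subset_Ioo hφs) hφs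

theorem HasWeakDerivOn.exists_ae_eq_const_of_deriv_zero [CompleteSpace E] {w : ℝ → E}
    (hab : a < b) (hw : HasWeakDerivOn w 0 (Ioo a b)) :
    ∃ c : E, ∀ᵐ t, t ∈ Ioo a b → w t = c := by
  obtain ⟨x, hx⟩ := nonempty_Ioo.2 hab
  obtain ⟨ψ, hψ, hψs, hψ₁⟩ :=
    exists_contDiff_tsupport_subset_integral_eq_one volume (Ioo_mem_nhds hx.1 hx.2)
  set c := ∫ t, ψ t • w t
  have hwc : ∀ᵐ t, t ∈ Ioo a b → w t - c = 0 := by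
    refine isOpen_Ioo.ae_eq_zero_of_integral_contDiff_smul_eq_zero
      (hw.locallyIntegrableOn.sub ((locallyIntegrable_const c).locallyIntegrableOn _))
      fun g hg hgc hgs => ?_
    have hgw : Integrable (fun t => g t • w t) :=
      integrable_smul_of_locallyIntegrableOn hw.locallyIntegrableOn hg.continuous hgc hgs
    have hg_const : Integrable (fun t => g t • c) :=
      (hg.continuous.integrable_of_hasCompactSupport hgc).smul_const c
    simp only [smul_sub]
    rw [integral_sub hgw hg_const, integral_smul_const, sub_eq_zero]
    exact hw.integral_smul_eq_of_deriv_zero hab hg hgs hψ hψs hψ₁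
  exact ⟨c, hwc.mono fun t ht hmem => sub_eq_zero.1 (ht hmem)⟩

theorem hasWeakDerivOn_intervalIntegral [CompleteSpace E] {f : ℝ → E}
    (hf : IntervalIntegrable f volume a b) :
    HasWeakDerivOn (fun t => ∫ s in a..t, f s) f (Ioo a b) where
  locallyIntegrableOn :=
    ((intervalIntegral.continuousOn_primitive_interval' hf left_mem_uIcc).mono
      (Ioo_subset_Icc_self.trans Icc_subset_uIcc)).locallyIntegrableOn measurableSet_Ioo
  locallyIntegrableOn_deriv := (hf.1.mono_set Ioo_subset_Ioc_self).locallyIntegrableOn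
  integral_deriv_smul φ hφ _ hφs := by
    have hφb : φ b = 0 := image_eq_zero_of_notMem_tsupport fun hb => (hφs hb).2.false
    have hφac : AbsolutelyContinuousOnInterval φ a b :=
      (hφ.of_le (by simp)).contDiffOn.absolutelyContinuousOnInterval
    have hparts := integral_deriv_smul_intervalIntegral hf hφac
    rw [hφb, zero_smul, zero_sub] at hparts
    rwa [← intervalIntegral_smul_eq_integral_of_tsupport_subset_Ioo hφs,
      ← intervalIntegral_smul_eq_integral_of_tsupport_subset_Ioo
        (tsupport_deriv_subset.trans hφs)]

theorem HasWeakDerivOn.exists_ae_eq_add_intervalIntegral [CompleteSpace E] {w w' : ℝ → E}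
    (hab : a < b) (hw : HasWeakDerivOn w w' (Ioo a b)) (hw' : IntervalIntegrable w' volume a b) :
    ∃ y : E, ∀ᵐ t, t ∈ Ioo a b → w t = y + ∫ s in a..t, w' s := by
  have hzero : HasWeakDerivOn (w - fun t => ∫ s in a..t, w' s) 0 (Ioo a b) :=
    sub_self w' ▸ hw.sub (hasWeakDerivOn_intervalIntegral hw')
  obtain ⟨y, hy⟩ := hzero.exists_ae_eq_const_of_deriv_zero hab
  exact ⟨y, hy.mono fun t ht hmem => sub_eq_iff_eq_add.1 (ht hmem)⟩

theorem hasWeakDerivOn_of_integral_inner_add_inner_deriv_eq_zero {H : Type*}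
    [NormedAddCommGroup H] [InnerProductSpace ℝ H] [CompleteSpace H] {w w' : ℝ → H} {U : Set ℝ}
    (hw : LocallyIntegrableOn w U) (hw' : LocallyIntegrableOn w' U)
    (h : ∀ η : ℝ → H, ContDiff ℝ ∞ η → HasCompactSupport η → tsupport η ⊆ U →
      ∫ t, (⟪w' t, η t⟫ + ⟪w t, deriv η t⟫) = 0) :
    HasWeakDerivOn w w' U where
  locallyIntegrableOn := hw
  locallyIntegrableOn_deriv := hw'
  integral_deriv_smul φ hφ hφc hφU := by
    have hint' : Integrable (fun t => φ t • w' t) :=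
      integrable_smul_of_locallyIntegrableOn hw' hφ.continuous hφc hφU
    have hint : Integrable (fun t => deriv φ t • w t) :=
      integrable_smul_of_locallyIntegrableOn hw (hφ.continuous_deriv (by simp)) hφc.deriv
        (tsupport_deriv_subset.trans hφU)
    rw [← add_eq_zero_iff_eq_neg', ← integral_add hint' hint]
    refine ext_inner_left ℝ fun v => ?_
    have hderiv (t : ℝ) : deriv (fun s => φ s • v) t = deriv φ t • v :=
      deriv_smul_const (hφ.differentiable (by simp) t) v
    calc ⟪v, ∫ t, (φ t • w' t + deriv φ t • w t)⟫
        = ∫ t, ⟪v, φ t • w' t + deriv φ t • w t⟫ := (integral_inner (hint'.add hint) v).symm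
      _ = ∫ t, (⟪w' t, φ t • v⟫ + ⟪w t, deriv (fun s => φ s • v) t⟫) := by
          simp only [hderiv, inner_add_right, inner_smul_right, real_inner_comm v]
      _ = 0 := h _ (hφ.smul contDiff_const) hφc.smul_right
          ((tsupport_smul_subset_left φ _).trans hφU)
      _ = ⟪v, 0⟫ := (inner_zero_right v).symm

end WeakDerivative

theorem stmt_1_general {H : Type*} [NormedAddCommGroup H] [InnerProductSpace ℝ H]
    [CompleteSpace H] {a b : ℝ} (hab : a < b) {x₁ x₂ : ℝ → H}
    (h₁ : IntegrableOn x₁ (Icc a b)) (h₂ : LocallyIntegrableOn x₂ (Ioo a b))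
    (h : ∀ η : ℝ → H, ContDiff ℝ (⊤ : ℕ∞) η → tsupport η ⊆ Ioo a b →
      (∫ s in a..b, (⟪x₁ s, η s⟫ + ⟪x₂ s, deriv η s⟫)) = 0) :
    ∃ y : H, ∀ᵐ t ∂(volume.restrict (Icc a b)), x₂ t = y + ∫ s in a..t, x₁ s := by
  have hweak : HasWeakDerivOn x₂ x₁ (Ioo a b) := by
    refine hasWeakDerivOn_of_integral_inner_add_inner_deriv_eq_zero h₂
      (h₁.mono_set Ioo_subset_Icc_self).locallyIntegrableOn fun η hη _ hηs => ?_
    have hsupport : Function.support (fun s => ⟪x₁ s, η s⟫ + ⟪x₂ s, deriv η s⟫) ⊆ tsupport η := by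
      refine Function.support_subset_iff'.2 fun s hs => ?_
      have hη's : deriv η s = 0 := Function.notMem_support.1 fun h' => hs (support_deriv_subset h')
      simp only [image_eq_zero_of_notMem_tsupport hs, hη's, inner_zero_right, add_zero]
    rw [← h η hη hηs, intervalIntegral.integral_eq_integral_of_support_subset
      (hsupport.trans (hηs.trans Ioo_subset_Ioc_self))]
  obtain ⟨y, hy⟩ := hweak.exists_ae_eq_add_intervalIntegral hab
    ((intervalIntegrable_iff_integrableOn_Icc_of_le hab.le).2 h₁)
  refine ⟨y, ?_⟩
  rwa [← restrict_Ioo_eq_restrict_Icc, ae_restrict_iff' measurableSet_Ioo]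

theorem stmt_1 (n : ℕ) (hn : 1 ≤ n) (a b : ℝ) (hab : a < b)
    (x₁ x₂ : ℝ → EuclideanSpace ℝ (Fin n))
    (h₁ : IntegrableOn x₁ (Icc a b)) (h₂ : IntegrableOn x₂ (Icc a b))
    (h : ∀ η : ℝ → EuclideanSpace ℝ (Fin n), ContDiff ℝ (⊤ : ℕ∞) η → tsupport η ⊆ Ioo a b →
      (∫ s in a..b, (⟪x₁ s, η s⟫ + ⟪x₂ s, deriv η s⟫)) = 0) :
    ∃ y : EuclideanSpace ℝ (Fin n), ∀ᵐ t ∂(volume.restrict (Icc a b)),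
      x₂ t = y + ∫ s in a..t, x₁ s :=
  stmt_1_general hab h₁ (h₂.mono_set Ioo_subset_Icc_self).locallyIntegrableOn h
end

section
/- Let 0 < α ≤ 1 and β > 0. Let A, B, C ∈ ℝ^{n×n} be matrices and let P, Q, R ∈ L^∞([a,b],ℝ^{n×n}) be essentially bounded matrix-valued functions. Suppose that for every ν ∈ L^∞([a,b],ℝⁿ) and every w ∈ ℝⁿ, setting η(t) := w + ∫_a^t ((t−s)^{α−1}/Γ(α)) ν(s) ds, one has η(a)ᵀ A η(a) + 2 η(a)ᵀ B η(b) + η(b)ᵀ C η(b) + ∫_a^b ((b−s)^{β−1}/Γ(β)) [ η(s)ᵀ P(s) η(s) + 2 η(s)ᵀ Q(s) ν(s) + ν(s)ᵀ R(s) ν(s) ] ds ≥ 0. Then for almost every t ∈ [a,b], the matrix ((b−t)^{β−1}/Γ(β)) R(t) is positive semidefinite, i.e. vᵀ ((b−t)^{β−1}/Γ(β)) R(t) v ≥ 0 for all v ∈ ℝⁿ. -/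
open MeasureTheory Set

/-- The quadratic/bilinear form `vᵀ M w` associated with a real `n × n` matrix. -/
def quadF {n : ℕ} (M : Matrix (Fin n) (Fin n) ℝ) (v w : EuclideanSpace ℝ (Fin n)) : ℝ :=
  ∑ i, ∑ j, v i * M i j * w j

/-!
Test the inequality with a needle `ν = 1_(t, t + h] v` and `w = 0`, so that `η a = 0`. The
fractional integral of the needle is `φ_h(s - t) v` with
`φ_h(x) = (x₊ ^ α - (x - h)₊ ^ α) / Γ(α + 1)`. As `h → 0⁺`, the `R`-term divided by `h` tends to
`k(t) vᵀ R(t) v` at Lebesgue points, and the other terms are `o(h)`: on the needle `φ_h = O(h ^ α)`,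
and everywhere `φ_h(x) = O(h |x| ^ (α - 1))` while `φ_h(x) → 0`, so that
`φ_h ^ 2 / h` tends to `0` and is dominated by a multiple of `|x| ^ (α - 1)`. Integrability of
this dominating function against the weight holds for almost every `t` because the convolution of
two integrable functions exists almost everywhere.
-/

open Filter Topology TopologicalSpace

section FractionalIntegral

variable {E : Type*} [NormedAddCommGroup E] [NormedSpace ℝ E]

/-- The left Riemann–Liouville fractional integral of order `α` of `f`, based at `a`. -/
noncomputable def rlIntegral (α a : ℝ) (f : ℝ → E) (t : ℝ) : E :=
  ∫ s in a..t, ((t - s) ^ (α - 1) / Real.Gamma α) • f s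

/-- The Riemann–Liouville fractional integral of order `α` of the indicator function of `(0, h]`,
evaluated at `x` (see `rlIntegral_indicator_Ioc`). -/
noncomputable def needleResponse (α h x : ℝ) : ℝ :=
  (max 0 x ^ α - max 0 (x - h) ^ α) / Real.Gamma (α + 1)

lemma intervalIntegrable_const_sub_rpow {α : ℝ} (hα : 0 < α) (x u v : ℝ) :
    IntervalIntegrable (fun s => (x - s) ^ (α - 1)) volume u v := by
  simpa using (intervalIntegral.intervalIntegrable_rpow' (a := x - u) (b := x - v)
    (by linarith : -1 < α - 1)).comp_sub_left x

lemma integral_const_sub_rpow {α : ℝ} (hα : 0 < α) (x u v : ℝ) :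
    ∫ s in u..v, (x - s) ^ (α - 1) = ((x - u) ^ α - (x - v) ^ α) / α := by
  rw [intervalIntegral.integral_comp_sub_left (fun y => y ^ (α - 1)) x,
    integral_rpow (Or.inl (by linarith)), sub_add_cancel]

lemma integral_indicator_Ioc_eq {a b c d : ℝ} (hac : a ≤ c) (hcd : c ≤ d) (hdb : d ≤ b)
    (f : ℝ → E) : ∫ s in a..b, (Ioc c d).indicator f s = ∫ s in c..d, f s := by
  rw [intervalIntegral.integral_of_le (hac.trans (hcd.trans hdb)),
    setIntegral_indicator measurableSet_Ioc, intervalIntegral.integral_of_le hcd,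
    inter_eq_right.2 (Ioc_subset_Ioc hac hdb)]

lemma needleResponse_of_nonpos {α h x : ℝ} (hh : 0 ≤ h) (hx : x ≤ 0) :
    needleResponse α h x = 0 := by
  simp [needleResponse, max_eq_left hx, max_eq_left (by linarith : x - h ≤ 0)]

theorem rlIntegral_indicator_Ioc [CompleteSpace E] {α a t h u : ℝ} (hα : 0 < α) (hh : 0 ≤ h)
    (hat : a ≤ t) (hau : a ≤ u) (v : E) :
    rlIntegral α a ((Ioc t (t + h)).indicator fun _ => v) u = needleResponse α h (u - t) • v := by
  have smul_indicator : ∀ s, ((u - s) ^ (α - 1) / Real.Gamma α) •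
      (Ioc t (t + h)).indicator (fun _ => v) s =
      (Ioc t (t + h)).indicator (fun s => ((u - s) ^ (α - 1) / Real.Gamma α) • v) s := fun s => by
    by_cases hs : s ∈ Ioc t (t + h) <;> simp [hs]
  simp_rw [rlIntegral, smul_indicator]
  rcases le_total u t with hut | htu
  · have outside : ∀ s ∈ uIcc a u,
        (Ioc t (t + h)).indicator (fun s => ((u - s) ^ (α - 1) / Real.Gamma α) • v) s = 0 := by
      intro s hs
      rw [uIcc_of_le hau] at hs
      exact indicator_of_notMem (fun hs' => by linarith [hs.2, hs'.1]) _
    simp [intervalIntegral.integral_congr outside, needleResponse_of_nonpos hh (sub_nonpos.2 hut)]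
  · have cut : u - min u (t + h) = max 0 (u - t - h) := by
      rw [← max_sub_sub_left, sub_self, sub_sub]
    have restrict : ∫ s in a..u,
        (Ioc t (t + h)).indicator (fun s => ((u - s) ^ (α - 1) / Real.Gamma α) • v) s =
        ∫ s in t..min u (t + h), ((u - s) ^ (α - 1) / Real.Gamma α) • v := by
      rw [intervalIntegral.integral_of_le hau, setIntegral_indicator measurableSet_Ioc,
        Ioc_inter_Ioc, max_eq_right hat,
        intervalIntegral.integral_of_le (le_min htu (by linarith))]
    rw [restrict, intervalIntegral.integral_smul_const, intervalIntegral.integral_div,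
      integral_const_sub_rpow hα, cut, needleResponse, Real.Gamma_add_one hα.ne', div_div,
      max_eq_right (sub_nonneg.2 htu)]

end FractionalIntegral

section NeedleResponse

variable {α : ℝ}

lemma continuous_needleResponse (hα : 0 ≤ α) (h : ℝ) : Continuous (needleResponse α h) := by
  have : Continuous fun x : ℝ => x ^ α := Real.continuous_rpow_const hα
  unfold needleResponse
  fun_prop

lemma tendsto_needleResponse_zero (hα : 0 ≤ α) (x : ℝ) :
    Tendsto (fun h => needleResponse α h x) (𝓝[>] 0) (𝓝 0) := by
  have : Continuous fun x : ℝ => x ^ α := Real.continuous_rpow_const hα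
  have continuous_in_width : Continuous fun h => needleResponse α h x := by
    unfold needleResponse
    fun_prop
  have value : needleResponse α 0 x = 0 := by simp [needleResponse]
  simpa only [value] using (continuous_in_width.tendsto 0).mono_left nhdsWithin_le_nhds

lemma needleResponse_nonneg (hα : 0 ≤ α) {h : ℝ} (hh : 0 ≤ h) (x : ℝ) :
    0 ≤ needleResponse α h x :=
  div_nonneg (sub_nonneg.2 (Real.rpow_le_rpow (le_max_left _ _)
    (max_le_max le_rfl (by linarith)) hα)) (Real.Gamma_pos_of_pos (by linarith)).le

lemma needleResponse_le_abs_rpow (hα : 0 ≤ α) (h x : ℝ) :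
    needleResponse α h x ≤ |x| ^ α / Real.Gamma (α + 1) := by
  have : 0 < Real.Gamma (α + 1) := Real.Gamma_pos_of_pos (by linarith)
  have head_le : max 0 x ^ α ≤ |x| ^ α :=
    Real.rpow_le_rpow (le_max_left _ _) (max_le (abs_nonneg x) (le_abs_self x)) hα
  have tail_nonneg : 0 ≤ max 0 (x - h) ^ α := Real.rpow_nonneg (le_max_left _ _) α
  unfold needleResponse
  gcongr
  linarith

lemma one_sub_mul_le_max_rpow (hα : 0 < α) {y : ℝ} (hy : 0 ≤ y) :
    1 - max 1 α * y ≤ max 0 (1 - y) ^ α := by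
  set z := max 0 (1 - y)
  have z_nonneg : 0 ≤ z := le_max_left _ _
  have z_le_one : z ≤ 1 := max_le zero_le_one (by linarith)
  have le_z : 1 - y ≤ z := le_max_right _ _
  calc 1 - max 1 α * y ≤ 1 + max 1 α * (z - 1) := by
        nlinarith [mul_le_mul_of_nonneg_left le_z (zero_le_one.trans (le_max_left 1 α))]
    _ ≤ (1 + (z - 1)) ^ max 1 α :=
        one_add_mul_self_le_rpow_one_add (by linarith) (le_max_left 1 α)
    _ ≤ z ^ α := by
        rw [add_sub_cancel]
        exact Real.rpow_le_rpow_of_exponent_ge' z_nonneg z_le_one hα.le (le_max_right 1 α)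

lemma rpow_sub_max_rpow_le (hα : 0 < α) {h x : ℝ} (hh : 0 ≤ h) (hx : 0 < x) :
    x ^ α - max 0 (x - h) ^ α ≤ max 1 α * h * x ^ (α - 1) := by
  have scaled : max 0 (x - h) = x * max 0 (1 - h / x) := by
    rw [mul_max_of_nonneg _ _ hx.le, mul_zero, mul_sub, mul_one, mul_div_cancel₀ h hx.ne']
  have bernoulli := one_sub_mul_le_max_rpow hα (div_nonneg hh hx.le)
  rw [scaled, Real.mul_rpow hx.le (le_max_left _ _)]
  calc x ^ α - x ^ α * max 0 (1 - h / x) ^ α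
      ≤ x ^ α - x ^ α * (1 - max 1 α * (h / x)) := by gcongr
    _ = max 1 α * h * x ^ (α - 1) := by rw [Real.rpow_sub_one hx.ne']; ring

lemma needleResponse_le_mul_rpow (hα : 0 < α) {h : ℝ} (hh : 0 ≤ h) (x : ℝ) :
    needleResponse α h x ≤ max 1 α / Real.Gamma (α + 1) * h * |x| ^ (α - 1) := by
  have : 0 < Real.Gamma (α + 1) := Real.Gamma_pos_of_pos (by linarith)
  rcases le_or_gt x 0 with hx | hx
  · rw [needleResponse_of_nonpos hh hx]
    positivity
  · rw [abs_of_pos hx, needleResponse, max_eq_right hx.le, div_mul_eq_mul_div, div_mul_eq_mul_div]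
    gcongr
    exact rpow_sub_max_rpow_le hα hh hx

lemma inv_mul_needleResponse_sq_le (hα : 0 < α) {h : ℝ} (hh : 0 < h) (x : ℝ) :
    h⁻¹ * needleResponse α h x ^ 2 ≤
      max 1 α / Real.Gamma (α + 1) * |x| ^ (α - 1) * needleResponse α h x := by
  have response_nonneg := needleResponse_nonneg hα.le hh.le x
  calc h⁻¹ * needleResponse α h x ^ 2
      = h⁻¹ * (needleResponse α h x * needleResponse α h x) := by rw [sq]
    _ ≤ h⁻¹ * (max 1 α / Real.Gamma (α + 1) * h * |x| ^ (α - 1) * needleResponse α h x) := by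
        gcongr
        exact needleResponse_le_mul_rpow hα hh.le x
    _ = max 1 α / Real.Gamma (α + 1) * |x| ^ (α - 1) * needleResponse α h x := by
        field_simp

lemma inv_mul_needleResponse_sq_le_abs_rpow (hα : 0 < α) {h : ℝ} (hh : 0 < h) (x : ℝ) :
    h⁻¹ * needleResponse α h x ^ 2 ≤
      max 1 α / Real.Gamma (α + 1) ^ 2 * |x| ^ α * |x| ^ (α - 1) := by
  have : 0 < Real.Gamma (α + 1) := Real.Gamma_pos_of_pos (by linarith)
  calc h⁻¹ * needleResponse α h x ^ 2
      ≤ max 1 α / Real.Gamma (α + 1) * |x| ^ (α - 1) * needleResponse α h x :=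
        inv_mul_needleResponse_sq_le hα hh x
    _ ≤ max 1 α / Real.Gamma (α + 1) * |x| ^ (α - 1) * (|x| ^ α / Real.Gamma (α + 1)) := by
        gcongr
        exact needleResponse_le_abs_rpow hα.le h x
    _ = max 1 α / Real.Gamma (α + 1) ^ 2 * |x| ^ α * |x| ^ (α - 1) := by ring

lemma tendsto_inv_mul_needleResponse_sq (hα : 0 < α) (x : ℝ) :
    Tendsto (fun h => h⁻¹ * needleResponse α h x ^ 2) (𝓝[>] 0) (𝓝 0) := by
  have upper : Tendsto (fun h => max 1 α / Real.Gamma (α + 1) * |x| ^ (α - 1) *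
      needleResponse α h x) (𝓝[>] 0) (𝓝 0) := by
    simpa using (tendsto_needleResponse_zero hα.le x).const_mul
      (max 1 α / Real.Gamma (α + 1) * |x| ^ (α - 1))
  refine squeeze_zero' ?_ ?_ upper
  · filter_upwards [self_mem_nhdsWithin] with h hh
    exact mul_nonneg (inv_nonneg.2 hh.le) (sq_nonneg _)
  · filter_upwards [self_mem_nhdsWithin] with h hh
    exact inv_mul_needleResponse_sq_le hα hh x

end NeedleResponse

section Asymptotics

variable {α a b t : ℝ} {p q r : ℝ → ℝ}

lemma ae_intervalIntegrable_mul_comp_sub {f g : ℝ → ℝ} (hf : IntervalIntegrable f volume a b)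
    (hg : LocallyIntegrable g) :
    ∀ᵐ t, t ∈ uIcc a b → IntervalIntegrable (fun s => f s * g (t - s)) volume a b := by
  have f_integrable : Integrable ((uIoc a b).indicator f) :=
    hf.def'.integrable_indicator measurableSet_uIoc
  have g_integrable : Integrable ((Icc (-|b - a|) |b - a|).indicator g) :=
    (hg.integrableOn_isCompact isCompact_Icc).integrable_indicator measurableSet_Icc
  filter_upwards [f_integrable.ae_convolution_exists (ContinuousLinearMap.mul ℝ ℝ) g_integrable]
    with t convolution_exists ht
  rw [intervalIntegrable_iff]
  refine (convolution_exists.integrableOn (s := uIoc a b)).congr_fun (fun s hs => ?_)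
    measurableSet_uIoc
  have near : t - s ∈ Icc (-|b - a|) |b - a| :=
    abs_le.1 (abs_sub_le_of_uIcc_subset_uIcc (uIcc_subset_uIcc (uIoc_subset_uIcc hs) ht))
  simp [indicator_of_mem hs, indicator_of_mem near]

lemma locallyIntegrable_abs_rpow_sub_one (hα : 0 < α) :
    LocallyIntegrable fun x : ℝ => |x| ^ (α - 1) := by
  refine locallyIntegrable_of_norm_le_rpow (C := 1) (α := 1 - α) (by simp) (by simpa) ?_
    (by fun_prop : Measurable fun x : ℝ => |x| ^ (α - 1)).aestronglyMeasurable
  filter_upwards with x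
  rw [Real.norm_of_nonneg (by positivity), one_mul, neg_sub, Real.norm_eq_abs]

theorem tendsto_inv_mul_integral_needleResponse_sq (hα : 0 < α)
    (hp : IntervalIntegrable p volume a b)
    (hpt : IntervalIntegrable (fun s => p s * |t - s| ^ (α - 1)) volume a b) :
    Tendsto (fun h => h⁻¹ * ∫ s in a..b, needleResponse α h (s - t) ^ 2 * p s)
      (𝓝[>] 0) (𝓝 0) := by
  set c := max 1 α / Real.Gamma (α + 1) ^ 2
  have pow_continuous : Continuous fun x : ℝ => x ^ α := Real.continuous_rpow_const hα.le
  have bound_integrable : IntervalIntegrable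
      (fun s => c * |s - t| ^ α * ‖p s * |t - s| ^ (α - 1)‖) volume a b :=
    hpt.norm.continuousOn_mul (by fun_prop : Continuous fun s => c * |s - t| ^ α).continuousOn
  have integrand_measurable (h : ℝ) : AEStronglyMeasurable
      (fun s => h⁻¹ * needleResponse α h (s - t) ^ 2 * p s) (volume.restrict (uIoc a b)) := by
    have := continuous_needleResponse hα.le h
    exact (by fun_prop : Continuous fun s => h⁻¹ * needleResponse α h (s - t) ^ 2)
      |>.aestronglyMeasurable.mul hp.def'.aestronglyMeasurable
  have dominated {h : ℝ} (hh : 0 < h) (s : ℝ) : ‖h⁻¹ * needleResponse α h (s - t) ^ 2 * p s‖ ≤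
      c * |s - t| ^ α * ‖p s * |t - s| ^ (α - 1)‖ := by
    have ratio_nonneg : 0 ≤ h⁻¹ * needleResponse α h (s - t) ^ 2 := by positivity
    rw [norm_mul, Real.norm_of_nonneg ratio_nonneg, norm_mul,
      Real.norm_of_nonneg (by positivity : 0 ≤ |t - s| ^ (α - 1)), abs_sub_comm t s]
    exact (mul_le_mul_of_nonneg_right (inv_mul_needleResponse_sq_le_abs_rpow hα hh _)
      (norm_nonneg _)).trans_eq (by ring)
  have pointwise (s : ℝ) :
      Tendsto (fun h => h⁻¹ * needleResponse α h (s - t) ^ 2 * p s) (𝓝[>] 0) (𝓝 0) := by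
    simpa using (tendsto_inv_mul_needleResponse_sq hα (s - t)).mul_const (p s)
  have limit := intervalIntegral.tendsto_integral_filter_of_dominated_convergence
    (l := 𝓝[>] (0 : ℝ)) _ (.of_forall integrand_measurable)
    (eventually_mem_nhdsWithin.mono fun h hh => .of_forall fun s _ => dominated hh s)
    bound_integrable (.of_forall fun s _ => pointwise s)
  simpa only [mul_assoc, intervalIntegral.integral_const_mul, intervalIntegral.integral_zero]
    using limit

theorem tendsto_inv_mul_integral_needleResponse_mul {l : ℝ} (hα : 0 < α) (htb : t < b)
    (hq : IntervalIntegrable q volume t b)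
    (hql : HasDerivAt (fun x => ∫ s in t..x, |q s|) l t) :
    Tendsto (fun h => h⁻¹ * ∫ s in t..t + h, needleResponse α h (s - t) * q s)
      (𝓝[>] 0) (𝓝 0) := by
  have average : Tendsto (fun h => h⁻¹ * ∫ s in t..t + h, |q s|) (𝓝[>] 0) (𝓝 l) := by
    simpa using hql.tendsto_slope_zero_right
  have pow_tendsto : Tendsto (fun h : ℝ => h ^ α) (𝓝[>] 0) (𝓝 0) := by
    simpa [Real.zero_rpow hα.ne'] using
      ((Real.continuous_rpow_const hα.le).tendsto 0).mono_left nhdsWithin_le_nhds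
  have upper : Tendsto (fun h => h ^ α / Real.Gamma (α + 1) * (h⁻¹ * ∫ s in t..t + h, |q s|))
      (𝓝[>] 0) (𝓝 0) := by
    simpa using (pow_tendsto.div_const (Real.Gamma (α + 1))).mul average
  refine squeeze_zero_norm' ?_ upper
  filter_upwards [Ioo_mem_nhdsGT (sub_pos.2 htb)] with h ⟨hh, hhb⟩
  have : 0 < Real.Gamma (α + 1) := Real.Gamma_pos_of_pos (by linarith)
  have q_integrable : IntervalIntegrable q volume t (t + h) :=
    hq.mono_set (uIcc_subset_uIcc_left (mem_uIcc_of_le (by linarith) (by linarith)))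
  have integral_bound : ‖∫ s in t..t + h, needleResponse α h (s - t) * q s‖ ≤
      ∫ s in t..t + h, h ^ α / Real.Gamma (α + 1) * |q s| := by
    refine intervalIntegral.norm_integral_le_of_norm_le (by linarith)
      (Eventually.of_forall fun s hs => ?_) (q_integrable.abs.const_mul _)
    rw [norm_mul, Real.norm_of_nonneg (needleResponse_nonneg hα.le hh.le _), Real.norm_eq_abs]
    gcongr
    refine (needleResponse_le_abs_rpow hα.le h _).trans ?_
    rw [abs_of_pos (sub_pos.2 hs.1)]
    have := hs.1
    gcongr
    linarith [hs.2]
  rw [intervalIntegral.integral_const_mul] at integral_bound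
  rw [norm_mul, norm_inv, Real.norm_of_nonneg hh.le, mul_left_comm]
  gcongr

lemma integral_needle_eq {h : ℝ} (hα : 0 < α) (hat : a ≤ t) (hh : 0 ≤ h) (htb : t + h ≤ b)
    (hp : IntervalIntegrable p volume a b) (hq : IntervalIntegrable q volume a b)
    (hr : IntervalIntegrable r volume a b) :
    ∫ s in a..b, (needleResponse α h (s - t) ^ 2 * p s +
        (Ioc t (t + h)).indicator (fun s => 2 * (needleResponse α h (s - t) * q s) + r s) s) =
      (∫ s in a..b, needleResponse α h (s - t) ^ 2 * p s) +
        (2 * (∫ s in t..t + h, needleResponse α h (s - t) * q s) + ∫ s in t..t + h, r s) := by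
  have response_continuous : Continuous fun s => needleResponse α h (s - t) :=
    (continuous_needleResponse hα.le h).comp (by fun_prop)
  have hab : a ≤ b := by linarith
  have p_integrable : IntervalIntegrable (fun s => needleResponse α h (s - t) ^ 2 * p s)
      volume a b := hp.continuousOn_mul (response_continuous.pow 2).continuousOn
  have q_integrable := (hq.continuousOn_mul response_continuous.continuousOn).const_mul 2
  have indicator_integrable : IntervalIntegrable ((Ioc t (t + h)).indicator
      fun s => 2 * (needleResponse α h (s - t) * q s) + r s) volume a b := by
    rw [intervalIntegrable_iff]
    exact (q_integrable.add hr).def'.indicator measurableSet_Ioc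
  have needle_subset : uIcc t (t + h) ⊆ uIcc a b := by
    rw [uIcc_of_le hab, uIcc_of_le (by linarith)]
    exact Icc_subset_Icc hat htb
  rw [intervalIntegral.integral_add p_integrable indicator_integrable,
    integral_indicator_Ioc_eq hat (by linarith) htb,
    intervalIntegral.integral_add (q_integrable.mono_set needle_subset)
      (hr.mono_set needle_subset), intervalIntegral.integral_const_mul]

theorem ae_nonneg_of_forall_needle {c : ℝ} (hα : 0 < α)
    (hp : IntervalIntegrable p volume a b) (hq : IntervalIntegrable q volume a b)
    (hr : IntervalIntegrable r volume a b)
    (hpos : ∀ t h, a < t → 0 < h → t + h < b →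
      0 ≤ needleResponse α h (b - t) ^ 2 * c +
        ∫ s in a..b, (needleResponse α h (s - t) ^ 2 * p s +
          (Ioc t (t + h)).indicator (fun s => 2 * (needleResponse α h (s - t) * q s) + r s) s)) :
    ∀ᵐ t, t ∈ Ioo a b → 0 ≤ r t := by
  filter_upwards [ae_intervalIntegrable_mul_comp_sub hp (locallyIntegrable_abs_rpow_sub_one hα),
    hq.abs.ae_hasDerivAt_integral, hr.ae_hasDerivAt_integral] with t p_weighted q_deriv r_deriv ht
  have t_mem : t ∈ uIcc a b := Icc_subset_uIcc (Ioo_subset_Icc_self ht)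
  have r_average : Tendsto (fun h => h⁻¹ * ∫ s in t..t + h, r s) (𝓝[>] 0) (𝓝 (r t)) := by
    simpa using (r_deriv t_mem t t_mem).tendsto_slope_zero_right
  have limit := ((tendsto_inv_mul_needleResponse_sq hα (b - t)).mul_const c).add
    ((tendsto_inv_mul_integral_needleResponse_sq hα hp (p_weighted t_mem)).add
      (((tendsto_inv_mul_integral_needleResponse_mul hα ht.2
        (hq.mono_set (uIcc_subset_uIcc_right t_mem)) (q_deriv t_mem t t_mem)).const_mul 2).add
          r_average))
  simp only [zero_mul, mul_zero, zero_add] at limit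
  refine ge_of_tendsto limit ?_
  filter_upwards [Ioo_mem_nhdsGT (sub_pos.2 ht.2)] with h ⟨hh, hhb⟩
  have test := hpos t h ht.1 hh (by linarith)
  rw [integral_needle_eq hα ht.1.le hh.le (by linarith) hp hq hr] at test
  exact (mul_nonneg (inv_nonneg.2 hh.le) test).trans_eq (by ring)

end Asymptotics

section QuadraticForm

variable {n : ℕ}

lemma quadF_smul_left (M : Matrix (Fin n) (Fin n) ℝ) (x : ℝ) (v w : EuclideanSpace ℝ (Fin n)) :
    quadF M (x • v) w = x * quadF M v w := by
  simp only [quadF, Finset.mul_sum, PiLp.smul_apply, smul_eq_mul, mul_assoc]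

lemma quadF_smul_right (M : Matrix (Fin n) (Fin n) ℝ) (x : ℝ) (v w : EuclideanSpace ℝ (Fin n)) :
    quadF M v (x • w) = x * quadF M v w := by
  simp only [quadF, Finset.mul_sum, PiLp.smul_apply, smul_eq_mul, mul_left_comm]

lemma quadF_zero_left (M : Matrix (Fin n) (Fin n) ℝ) (w : EuclideanSpace ℝ (Fin n)) :
    quadF M 0 w = 0 := by
  simp [quadF]

lemma quadF_zero_right (M : Matrix (Fin n) (Fin n) ℝ) (v : EuclideanSpace ℝ (Fin n)) :
    quadF M v 0 = 0 := by
  simp [quadF]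

lemma continuous_quadF_self (M : Matrix (Fin n) (Fin n) ℝ) : Continuous fun v => quadF M v v := by
  unfold quadF
  fun_prop

lemma intervalIntegrable_mul_quadF {a b : ℝ} {k : ℝ → ℝ} {M : ℝ → Matrix (Fin n) (Fin n) ℝ}
    (hM : ∀ i j, IntervalIntegrable (fun s => k s * M s i j) volume a b)
    (v w : EuclideanSpace ℝ (Fin n)) :
    IntervalIntegrable (fun s => k s * quadF (M s) v w) volume a b := by
  have entrywise : (fun s => k s * quadF (M s) v w) =
      ∑ i, ∑ j, fun s => v i * w j * (k s * M s i j) := by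
    ext s
    simp only [quadF, Finset.mul_sum, Finset.sum_apply]
    exact Finset.sum_congr rfl fun i _ => Finset.sum_congr rfl fun j _ => by ring
  rw [entrywise]
  exact .sum _ fun i _ => .sum _ fun j _ => (hM i j).const_mul _

lemma intervalIntegrable_mul_entry_of_ae_abs_le {a b c : ℝ} (hab : a ≤ b) {k : ℝ → ℝ}
    (hk : IntervalIntegrable k volume a b) {M : ℝ → Matrix (Fin n) (Fin n) ℝ}
    (hM : ∀ i j, Measurable fun s => M s i j)
    (hMc : ∀ᵐ s, s ∈ Icc a b → ∀ i j, |M s i j| ≤ c) (i j : Fin n) :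
    IntervalIntegrable (fun s => k s * M s i j) volume a b := by
  rw [intervalIntegrable_iff_integrableOn_Ioc_of_le hab]
  refine hk.1.mul_bdd (c := c) (hM i j).aestronglyMeasurable ?_
  rw [ae_restrict_iff' measurableSet_Ioc]
  filter_upwards [hMc] with s hs hs_mem using hs (Ioc_subset_Icc_self hs_mem) i j

end QuadraticForm

theorem stmt_3_general {n : ℕ} {a b α : ℝ} (hα : 0 < α) (C : Matrix (Fin n) (Fin n) ℝ)
    {k : ℝ → ℝ} {P Q R : ℝ → Matrix (Fin n) (Fin n) ℝ}
    (hP : ∀ i j, IntervalIntegrable (fun s => k s * P s i j) volume a b)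
    (hQ : ∀ i j, IntervalIntegrable (fun s => k s * Q s i j) volume a b)
    (hR : ∀ i j, IntervalIntegrable (fun s => k s * R s i j) volume a b)
    (hpos : ∀ ν : ℝ → EuclideanSpace ℝ (Fin n), Measurable ν → (∃ c, ∀ s, ‖ν s‖ ≤ c) →
      0 ≤ quadF C (rlIntegral α a ν b) (rlIntegral α a ν b) +
        ∫ s in a..b, k s * (quadF (P s) (rlIntegral α a ν s) (rlIntegral α a ν s) +
          2 * quadF (Q s) (rlIntegral α a ν s) (ν s) + quadF (R s) (ν s) (ν s))) :
    ∀ᵐ t ∂(volume.restrict (Icc a b)), ∀ v : EuclideanSpace ℝ (Fin n),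
      0 ≤ k t * quadF (R t) v v := by
  have nonneg_of_fixed (v : EuclideanSpace ℝ (Fin n)) :
      ∀ᵐ t, t ∈ Ioo a b → 0 ≤ k t * quadF (R t) v v := by
    refine ae_nonneg_of_forall_needle (c := quadF C v v) hα (intervalIntegrable_mul_quadF hP v v)
      (intervalIntegrable_mul_quadF hQ v v) (intervalIntegrable_mul_quadF hR v v)
      fun t h hat hh htb => ?_
    have test := hpos ((Ioc t (t + h)).indicator fun _ => v)
      (measurable_const.indicator measurableSet_Ioc)
      ⟨‖v‖, fun s => norm_indicator_le_norm_self _ _⟩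
    rw [rlIntegral_indicator_Ioc hα hh.le hat.le (by linarith), quadF_smul_left, quadF_smul_right,
      ← mul_assoc, ← sq] at test
    refine test.trans_eq (congrArg _ (intervalIntegral.integral_congr fun s hs => ?_))
    rw [uIcc_of_le (by linarith)] at hs
    simp only [rlIntegral_indicator_Ioc hα hh.le hat.le hs.1, quadF_smul_left, quadF_smul_right]
    by_cases on_needle : s ∈ Ioc t (t + h)
    · simp only [indicator_of_mem on_needle]
      ring
    · simp only [indicator_of_notMem on_needle, quadF_zero_right]
      ring
  rw [← restrict_Ioo_eq_restrict_Icc, ae_restrict_iff' measurableSet_Ioo]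
  filter_upwards [ae_all_iff.2 fun m => nonneg_of_fixed (denseSeq _ m)]
    with t nonneg_on_dense ht v
  exact (denseRange_denseSeq _).induction_on v
    (isClosed_le continuous_const (continuous_const.mul (continuous_quadF_self _)))
    fun m => nonneg_on_dense m ht

theorem stmt_3 (n : ℕ) (hn : 1 ≤ n) (a b : ℝ) (hab : a < b)
    (α β : ℝ) (hα0 : 0 < α) (hα1 : α ≤ 1) (hβ : 0 < β)
    (A B C : Matrix (Fin n) (Fin n) ℝ)
    (P Q R : ℝ → Matrix (Fin n) (Fin n) ℝ)
    (hPm : ∀ i j, Measurable fun s => P s i j) (hQm : ∀ i j, Measurable fun s => Q s i j)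
    (hRm : ∀ i j, Measurable fun s => R s i j)
    (cP cQ cR : ℝ)
    (hPb : ∀ᵐ s ∂(volume : Measure ℝ), s ∈ Icc a b → ∀ i j, |P s i j| ≤ cP)
    (hQb : ∀ᵐ s ∂(volume : Measure ℝ), s ∈ Icc a b → ∀ i j, |Q s i j| ≤ cQ)
    (hRb : ∀ᵐ s ∂(volume : Measure ℝ), s ∈ Icc a b → ∀ i j, |R s i j| ≤ cR)
    (hpos : ∀ ν : ℝ → EuclideanSpace ℝ (Fin n), Measurable ν →
      (∃ Cν, ∀ᵐ s ∂(volume : Measure ℝ), s ∈ Icc a b → ‖ν s‖ ≤ Cν) →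
      ∀ w : EuclideanSpace ℝ (Fin n), ∀ η : ℝ → EuclideanSpace ℝ (Fin n),
      (∀ t, η t = w + ∫ s in a..t, ((t - s) ^ (α - 1) / Real.Gamma α) • ν s) →
      0 ≤ quadF A (η a) (η a) + 2 * quadF B (η a) (η b) + quadF C (η b) (η b)
        + ∫ s in a..b, ((b - s) ^ (β - 1) / Real.Gamma β) *
            (quadF (P s) (η s) (η s) + 2 * quadF (Q s) (η s) (ν s)
              + quadF (R s) (ν s) (ν s))) :
    ∀ᵐ t ∂(volume.restrict (Icc a b)), ∀ v : EuclideanSpace ℝ (Fin n),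
      0 ≤ ((b - t) ^ (β - 1) / Real.Gamma β) * quadF (R t) v v := by
  have weight_integrable :=
    (intervalIntegrable_const_sub_rpow hβ b a b).div_const (Real.Gamma β)
  refine stmt_3_general hα0 C
    (intervalIntegrable_mul_entry_of_ae_abs_le hab.le weight_integrable hPm hPb)
    (intervalIntegrable_mul_entry_of_ae_abs_le hab.le weight_integrable hQm hQb)
    (intervalIntegrable_mul_entry_of_ae_abs_le hab.le weight_integrable hRm hRb)
    fun ν hν ⟨c, hc⟩ => ?_
  simpa [rlIntegral, quadF_zero_left] using hpos ν hν ⟨c, .of_forall fun s _ => hc s⟩ 0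
    (rlIntegral α a ν) fun t => (zero_add _).symm
end

section
/- (Euler–Lagrange equation, unconstrained case.) Let 0 < α ≤ 1 and β > 0, and let φ : ℝⁿ×ℝⁿ → ℝ and L : ℝⁿ×ℝⁿ×[a,b] → ℝ be of class C². For (u',y') ∈ L^∞([a,b],ℝⁿ)×ℝⁿ set x(t,u',y') := y' + ∫_a^t ((t−s)^{α−1}/Γ(α)) u'(s) ds and 𝓛(u',y') := φ(y', x(b,u',y')) + ∫_a^b ((b−s)^{β−1}/Γ(β)) L( x(s,u',y'), u'(s), s ) ds. Suppose (u,y) ∈ L^∞([a,b],ℝⁿ)×ℝⁿ satisfies 𝓛(u,y) ≤ 𝓛(u',y') for all (u',y') ∈ L^∞([a,b],ℝⁿ)×ℝⁿ, and write x := x(·,u,y) and p̃(s) := ((b−s)^{β−1}/Γ(β)) ∂₂L(x(s),u(s),s). Then there exists an absolutely continuous function q : [a,b] → ℝⁿ such that q(t) = ∫_t^b ((s−t)^{−α}/Γ(1−α)) p̃(s) ds for almost every t ∈ [a,b] when α < 1 (and q(t) = p̃(t) for almost every t when α = 1), and q'(t) = ((b−t)^{β−1}/Γ(β)) ∂₁L(x(t),u(t),t)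 for almost every t ∈ [a,b]. Equivalently, p̃ possesses a right Riemann–Liouville fractional derivative of order α satisfying D^α_{b−}[p̃](t) = −((b−t)^{β−1}/Γ(β)) ∂₁L(x(t),u(t),t) a.e. -/
open MeasureTheory Set
open scoped RealInnerProductSpace

/-- The trajectory `x(·,u,y)` associated with a Caputo fractional derivative `u`
of order `α` and initial condition `y`. -/
noncomputable def traj (n : ℕ) (a α : ℝ) (u : ℝ → EuclideanSpace ℝ (Fin n))
    (y : EuclideanSpace ℝ (Fin n)) (t : ℝ) : EuclideanSpace ℝ (Fin n) :=
  y + ∫ s in a..t, ((t - s) ^ (α - 1) / Real.Gamma α) • u s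

/-- The Bolza functional. -/
noncomputable def bolza (n : ℕ) (a b α β : ℝ)
    (φ : EuclideanSpace ℝ (Fin n) × EuclideanSpace ℝ (Fin n) → ℝ)
    (L : EuclideanSpace ℝ (Fin n) × EuclideanSpace ℝ (Fin n) × ℝ → ℝ)
    (u : ℝ → EuclideanSpace ℝ (Fin n)) (y : EuclideanSpace ℝ (Fin n)) : ℝ :=
  φ (y, traj n a α u y b) +
    ∫ s in a..b, ((b - s) ^ (β - 1) / Real.Gamma β) * L (traj n a α u y s, u s, s)

/-- Membership in `L^∞([a,b],ℝⁿ)` (a measurable, essentially bounded representative). -/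
def admissible (n : ℕ) (a b : ℝ) (u : ℝ → EuclideanSpace ℝ (Fin n)) : Prop :=
  Measurable u ∧ ∃ C : ℝ, ∀ᵐ s ∂(volume : Measure ℝ), s ∈ Icc a b → ‖u s‖ ≤ C

/-!
Stationarity of the Bolza functional in the control `u` says that the integral of
`⟪(b - ·)^(α - 1) / Γ(α) • c + I^α F + p̃, v⟫` vanishes for every bounded `v`, where `c` is `∂₂φ` at
the endpoints, `F` the weighted force `∂₁L` and `I^α` the right fractional integral, which appears
because it is the adjoint of the left one. By the fundamental lemma the left factor is zero almost
everywhere. This is the Euler–Lagrange equation in integral form: applying `I^(1 - α)`, the Beta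
integral and the semigroup law of the kernels turn it into `I^(1 - α) p̃ = -(c + ∫ s in ·..b, F s)`,
and the right side is absolutely continuous with derivative `F`.
-/

section FractionalIntegrals

variable {E : Type*} [NormedAddCommGroup E] [NormedSpace ℝ E] {a b c s t γ δ : ℝ} {f : ℝ → E}

/-- The Riemann–Liouville kernel `x₊ ^ (γ - 1) / Γ(γ)`, with which fractional integration of order
`γ` is convolution. It vanishes at `0`, so that the semigroup law holds at every point. -/
noncomputable def rlKernel (γ : ℝ) : ℝ → ℝ :=
  (Ioi 0).indicator fun x => x ^ (γ - 1) / Real.Gamma γ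

/-- The left Riemann–Liouville integral of order `γ` based at `a`. -/
noncomputable def rlIntegralLeft (γ a : ℝ) (f : ℝ → E) (s : ℝ) : E :=
  ∫ t in a..s, ((s - t) ^ (γ - 1) / Real.Gamma γ) • f t

/-- The right Riemann–Liouville integral of order `γ` based at `b`. -/
noncomputable def rlIntegralRight (γ b : ℝ) (f : ℝ → E) (t : ℝ) : E :=
  ∫ s in t..b, ((s - t) ^ (γ - 1) / Real.Gamma γ) • f s

lemma rlKernel_of_pos (hc : 0 < c) : rlKernel γ c = c ^ (γ - 1) / Real.Gamma γ :=
  indicator_of_mem (mem_Ioi.mpr hc) _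

lemma rlKernel_of_nonpos (hc : c ≤ 0) : rlKernel γ c = 0 :=
  indicator_of_notMem (notMem_Ioi.mpr hc) _

lemma rlKernel_pos (hγ : 0 < γ) (hc : 0 < c) : 0 < rlKernel γ c := by
  rw [rlKernel_of_pos hc]
  exact div_pos (Real.rpow_pos_of_pos hc _) (Real.Gamma_pos_of_pos hγ)

lemma rlKernel_nonneg (hγ : 0 < γ) (c : ℝ) : 0 ≤ rlKernel γ c := by
  rcases le_or_gt c 0 with hc | hc
  exacts [(rlKernel_of_nonpos hc).ge, (rlKernel_pos hγ hc).le]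

lemma measurable_rlKernel (γ : ℝ) : Measurable (rlKernel γ) :=
  Measurable.indicator (by fun_prop) measurableSet_Ioi

lemma intervalIntegrable_rlKernel (hγ : 0 < γ) (a b : ℝ) :
    IntervalIntegrable (rlKernel γ) volume a b := by
  have h := (intervalIntegral.intervalIntegrable_rpow' (a := a) (b := b)
    (by linarith : -1 < γ - 1)).div_const (Real.Gamma γ)
  exact ⟨h.1.indicator measurableSet_Ioi, h.2.indicator measurableSet_Ioi⟩

lemma integrableOn_rlKernel_sub_left (hγ : 0 < γ) (s a b : ℝ) :
    IntegrableOn (fun t => rlKernel γ (s - t)) (Ioc a b) := by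
  simpa using ((intervalIntegrable_rlKernel hγ (s - a) (s - b)).comp_sub_left s).1

lemma setIntegral_rlKernel_sub_left_le (hγ : 0 < γ) (hs : s ∈ Icc a b) :
    ∫ t in Ioc a b, rlKernel γ (s - t) ≤ ∫ x in (a - b)..(b - a), rlKernel γ x := by
  have hab : a ≤ b := hs.1.trans hs.2
  rw [← intervalIntegral.integral_of_le hab, intervalIntegral.integral_comp_sub_left]
  exact intervalIntegral.integral_mono_interval (by linarith [hs.1]) (by linarith)
    (by linarith [hs.2]) (.of_forall (rlKernel_nonneg hγ)) (intervalIntegrable_rlKernel hγ _ _)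

lemma integral_rpow_mul_sub_rpow (hγ : 0 < γ) (hδ : 0 < δ) (hc : 0 < c) :
    ∫ x in (0 : ℝ)..c, x ^ (γ - 1) * (c - x) ^ (δ - 1) =
      c ^ (γ + δ - 1) * (Real.Gamma γ * Real.Gamma δ / Real.Gamma (γ + δ)) := by
  have hbeta := Complex.betaIntegral_scaled γ δ hc
  rw [Complex.betaIntegral_eq_Gamma_mul_div _ _ (by simpa) (by simpa)] at hbeta
  apply Complex.ofReal_injective
  rw [← intervalIntegral.integral_ofReal]
  push_cast [Complex.ofReal_cpow hc.le, ← Complex.Gamma_ofReal]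
  rw [← hbeta]
  refine intervalIntegral.integral_congr fun x hx => ?_
  rw [uIcc_of_le hc.le] at hx
  push_cast [Complex.ofReal_cpow hx.1, Complex.ofReal_cpow (sub_nonneg.mpr hx.2)]
  rfl

lemma rlKernel_mul_rlKernel_eq_indicator (γ δ c : ℝ) :
    (fun x => rlKernel γ x * rlKernel δ (c - x)) = (Ioo 0 c).indicator fun x =>
      x ^ (γ - 1) * (c - x) ^ (δ - 1) / (Real.Gamma γ * Real.Gamma δ) := by
  ext x
  by_cases hx : x ∈ Ioo 0 c
  · rw [indicator_of_mem hx, rlKernel_of_pos hx.1, rlKernel_of_pos (sub_pos.mpr hx.2),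
      div_mul_div_comm]
  · rw [indicator_of_notMem hx]
    rcases le_or_gt x 0 with h0 | h0
    · rw [rlKernel_of_nonpos h0, zero_mul]
    · rw [rlKernel_of_nonpos (sub_nonpos.mpr (not_lt.mp fun h => hx ⟨h0, h⟩)), mul_zero]

lemma integral_rlKernel_mul_rlKernel (hγ : 0 < γ) (hδ : 0 < δ) (c : ℝ) :
    ∫ x, rlKernel γ x * rlKernel δ (c - x) = rlKernel (γ + δ) c := by
  rw [rlKernel_mul_rlKernel_eq_indicator, integral_indicator measurableSet_Ioo]
  rcases le_or_gt c 0 with hc | hc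
  · simp [Ioo_eq_empty hc.not_gt, rlKernel_of_nonpos hc]
  · rw [← integral_Ioc_eq_integral_Ioo, ← intervalIntegral.integral_of_le hc.le,
      intervalIntegral.integral_div, integral_rpow_mul_sub_rpow hγ hδ hc, rlKernel_of_pos hc]
    have := (Real.Gamma_pos_of_pos hγ).ne'
    have := (Real.Gamma_pos_of_pos hδ).ne'
    field_simp

lemma integrable_rlKernel_mul_rlKernel (hγ : 0 < γ) (hδ : 0 < δ) (c : ℝ) :
    Integrable fun x => rlKernel γ x * rlKernel δ (c - x) := by
  rcases le_or_gt c 0 with hc | hc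
  · simp [rlKernel_mul_rlKernel_eq_indicator, Ioo_eq_empty hc.not_gt]
  · refine .of_integral_ne_zero ?_
    rw [integral_rlKernel_mul_rlKernel hγ hδ]
    exact (rlKernel_pos (add_pos hγ hδ) hc).ne'

lemma integrable_rlKernel_sub_mul_rlKernel_sub (hγ : 0 < γ) (hδ : 0 < δ) (s t : ℝ) :
    Integrable fun τ => rlKernel γ (τ - t) * rlKernel δ (s - τ) := by
  simpa only [sub_sub_sub_cancel_right] using
    (integrable_rlKernel_mul_rlKernel hγ hδ (s - t)).comp_sub_right t

lemma setIntegral_rlKernel_sub_mul_rlKernel_sub (hγ : 0 < γ) (hδ : 0 < δ) (ht : a ≤ t)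
    (hs : s ≤ b) :
    ∫ τ in Ioc a b, rlKernel γ (τ - t) * rlKernel δ (s - τ) = rlKernel (γ + δ) (s - t) := by
  rw [setIntegral_eq_integral_of_forall_compl_eq_zero, ← integral_rlKernel_mul_rlKernel hγ hδ,
    ← integral_sub_right_eq_self (fun x => rlKernel γ x * rlKernel δ (s - t - x)) t]
  · simp only [sub_sub_sub_cancel_right]
  · intro τ hτ
    rcases le_or_gt τ a with h | h
    · rw [rlKernel_of_nonpos (by linarith), zero_mul]
    · rw [rlKernel_of_nonpos (c := s - τ) (by linarith [not_le.mp fun hb => hτ ⟨h, hb⟩]), mul_zero]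

lemma rlIntegralLeft_eq_setIntegral (γ : ℝ) (f : ℝ → E) (hs : s ∈ Icc a b) :
    rlIntegralLeft γ a f s = ∫ t in Ioc a b, rlKernel γ (s - t) • f t := by
  have hker : (fun t => rlKernel γ (s - t) • f t) =
      (Iio s).indicator fun t => ((s - t) ^ (γ - 1) / Real.Gamma γ) • f t := by
    ext t
    by_cases h : t < s <;> simp [rlKernel, h]
  rw [hker, setIntegral_indicator measurableSet_Iio, rlIntegralLeft,
    intervalIntegral.integral_of_le hs.1, integral_Ioc_eq_integral_Ioo]
  congr 2
  ext t
  simp only [mem_Ioo, mem_inter_iff, mem_Ioc, mem_Iio]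
  grind

lemma rlIntegralRight_eq_setIntegral (γ : ℝ) (f : ℝ → E) (ht : t ∈ Icc a b) :
    rlIntegralRight γ b f t = ∫ s in Ioc a b, rlKernel γ (s - t) • f s := by
  have hker : (fun s => rlKernel γ (s - t) • f s) =
      (Ioi t).indicator fun s => ((s - t) ^ (γ - 1) / Real.Gamma γ) • f s := by
    ext s
    by_cases h : t < s <;> simp [rlKernel, h]
  rw [hker, setIntegral_indicator measurableSet_Ioi, rlIntegralRight,
    intervalIntegral.integral_of_le ht.2, Ioc_inter_Ioi, sup_eq_right.mpr ht.1]

lemma rlIntegralRight_one (b : ℝ) (f : ℝ → E) (t : ℝ) :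
    rlIntegralRight 1 b f t = ∫ s in t..b, f s := by
  simp [rlIntegralRight]

lemma rlKernel_one_of_pos (hc : 0 < c) : rlKernel 1 c = 1 := by
  simp [rlKernel_of_pos hc]

end FractionalIntegrals

section FractionalCalculusOnInterval

variable {E : Type*} [NormedAddCommGroup E] [NormedSpace ℝ E] {a b s t γ δ : ℝ} {f g : ℝ → E}

lemma aestronglyMeasurable_rlIntegralLeft (γ : ℝ)
    (hf : AEStronglyMeasurable f (volume.restrict (Ioc a b))) :
    AEStronglyMeasurable (rlIntegralLeft γ a f) (volume.restrict (Ioc a b)) := by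
  have hker : Measurable fun p : ℝ × ℝ => rlKernel γ (p.1 - p.2) :=
    (measurable_rlKernel γ).comp (by fun_prop)
  refine (hker.aestronglyMeasurable.smul hf.comp_snd).integral_prod_right'.congr ?_
  filter_upwards [ae_restrict_mem measurableSet_Ioc] with s hs
  exact (rlIntegralLeft_eq_setIntegral γ f (Ioc_subset_Icc_self hs)).symm

lemma integrable_rlKernel_sub_smul (hγ : 0 < γ) (s : ℝ)
    (hf : MemLp f ⊤ (volume.restrict (Ioc a b))) :
    Integrable (fun t => rlKernel γ (s - t) • f t) (volume.restrict (Ioc a b)) :=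
  (integrableOn_rlKernel_sub_left hγ s a b).smul_of_top_left hf

lemma norm_rlIntegralLeft_le (hγ : 0 < γ) (hf : MemLp f ⊤ (volume.restrict (Ioc a b)))
    (hs : s ∈ Icc a b) :
    ‖rlIntegralLeft γ a f s‖ ≤
      (∫ x in (a - b)..(b - a), rlKernel γ x) * lpNorm f ⊤ (volume.restrict (Ioc a b)) := by
  rw [rlIntegralLeft_eq_setIntegral γ f hs]
  calc ‖∫ t in Ioc a b, rlKernel γ (s - t) • f t‖
      ≤ ∫ t in Ioc a b, rlKernel γ (s - t) * lpNorm f ⊤ (volume.restrict (Ioc a b)) := by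
        refine norm_integral_le_of_norm_le
          ((integrableOn_rlKernel_sub_left hγ s a b).mul_const _) ?_
        filter_upwards [ae_le_lpNorm_exponent_top hf] with t ht
        rw [norm_smul, Real.norm_of_nonneg (rlKernel_nonneg hγ _)]
        exact mul_le_mul_of_nonneg_left ht (rlKernel_nonneg hγ _)
    _ ≤ _ := by
        rw [integral_mul_const]
        exact mul_le_mul_of_nonneg_right (setIntegral_rlKernel_sub_left_le hγ hs) lpNorm_nonneg

lemma memLp_top_rlIntegralLeft (hγ : 0 < γ) (hf : MemLp f ⊤ (volume.restrict (Ioc a b))) :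
    MemLp (rlIntegralLeft γ a f) ⊤ (volume.restrict (Ioc a b)) := by
  refine memLp_top_of_bound (aestronglyMeasurable_rlIntegralLeft γ hf.1)
    ((∫ x in (a - b)..(b - a), rlKernel γ x) * lpNorm f ⊤ (volume.restrict (Ioc a b))) ?_
  filter_upwards [ae_restrict_mem measurableSet_Ioc] with s hs
  exact norm_rlIntegralLeft_le hγ hf (Ioc_subset_Icc_self hs)

lemma rlIntegralLeft_add_const_smul (hγ : 0 < γ) (hf : MemLp f ⊤ (volume.restrict (Ioc a b)))
    (hg : MemLp g ⊤ (volume.restrict (Ioc a b))) (ε : ℝ)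
    (hs : s ∈ Icc a b) :
    rlIntegralLeft γ a (fun t => f t + ε • g t) s =
      rlIntegralLeft γ a f s + ε • rlIntegralLeft γ a g s := by
  simp only [rlIntegralLeft_eq_setIntegral γ _ hs]
  simp only [smul_add, smul_comm _ ε]
  rw [← integral_smul]
  exact integral_add (integrable_rlKernel_sub_smul hγ s hf)
    ((integrable_rlKernel_sub_smul hγ s hg).smul ε)

lemma integrable_prod_rlKernel_smul (hγ : 0 < γ) (hf : IntegrableOn f (Ioc a b)) :
    Integrable (fun p : ℝ × ℝ => rlKernel γ (p.1 - p.2) • f p.1)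
      ((volume.restrict (Ioc a b)).prod (volume.restrict (Ioc a b))) := by
  have hker : Measurable fun p : ℝ × ℝ => rlKernel γ (p.1 - p.2) :=
    (measurable_rlKernel γ).comp (by fun_prop)
  have hmeas : AEStronglyMeasurable (fun p : ℝ × ℝ => rlKernel γ (p.1 - p.2) • f p.1)
      ((volume.restrict (Ioc a b)).prod (volume.restrict (Ioc a b))) :=
    hker.aestronglyMeasurable.smul hf.1.comp_fst
  refine (integrable_prod_iff hmeas).mpr ⟨.of_forall fun s =>
    Integrable.smul_const (integrableOn_rlKernel_sub_left hγ s a b) (f s), ?_⟩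
  refine (hf.norm.const_mul (∫ x in (a - b)..(b - a), rlKernel γ x)).mono'
    hmeas.norm.integral_prod_right' ?_
  filter_upwards [ae_restrict_mem measurableSet_Ioc] with s hs
  simp only [norm_smul, Real.norm_of_nonneg (rlKernel_nonneg hγ _)]
  rw [integral_mul_const, norm_mul, norm_norm,
    Real.norm_of_nonneg (integral_nonneg fun t => rlKernel_nonneg hγ _)]
  exact mul_le_mul_of_nonneg_right
    (setIntegral_rlKernel_sub_left_le hγ (Ioc_subset_Icc_self hs)) (norm_nonneg _)

lemma integrableOn_rlIntegralRight (hγ : 0 < γ) (hf : IntegrableOn f (Ioc a b)) :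
    IntegrableOn (rlIntegralRight γ b f) (Ioc a b) := by
  refine (integrable_prod_rlKernel_smul hγ hf).integral_prod_right.congr ?_
  filter_upwards [ae_restrict_mem measurableSet_Ioc] with t ht
  exact (rlIntegralRight_eq_setIntegral γ f (Ioc_subset_Icc_self ht)).symm

lemma integrable_prod_rlKernel_mul_rlKernel_smul (hγ : 0 < γ) (hδ : 0 < δ) (ht : a ≤ t)
    (hf : AEStronglyMeasurable f (volume.restrict (Ioc a b)))
    (hkf : IntegrableOn (fun s => rlKernel (γ + δ) (s - t) • f s) (Ioc a b)) :
    Integrable (fun p : ℝ × ℝ => (rlKernel γ (p.2 - t) * rlKernel δ (p.1 - p.2)) • f p.1)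
      ((volume.restrict (Ioc a b)).prod (volume.restrict (Ioc a b))) := by
  have hker : Measurable fun p : ℝ × ℝ => rlKernel γ (p.2 - t) * rlKernel δ (p.1 - p.2) :=
    ((measurable_rlKernel γ).comp (by fun_prop)).mul ((measurable_rlKernel δ).comp (by fun_prop))
  have hmeas : AEStronglyMeasurable
      (fun p : ℝ × ℝ => (rlKernel γ (p.2 - t) * rlKernel δ (p.1 - p.2)) • f p.1)
      ((volume.restrict (Ioc a b)).prod (volume.restrict (Ioc a b))) :=
    hker.aestronglyMeasurable.smul hf.comp_fst
  refine (integrable_prod_iff hmeas).mpr ⟨.of_forall fun s => Integrable.smul_const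
    (integrable_rlKernel_sub_mul_rlKernel_sub hγ hδ s t).restrict (f s), hkf.norm.congr ?_⟩
  filter_upwards [ae_restrict_mem measurableSet_Ioc] with s hs
  simp only [norm_smul, norm_mul, Real.norm_of_nonneg (rlKernel_nonneg hγ _),
    Real.norm_of_nonneg (rlKernel_nonneg hδ _),
    Real.norm_of_nonneg (rlKernel_nonneg (add_pos hγ hδ) _)]
  rw [integral_mul_const, setIntegral_rlKernel_sub_mul_rlKernel_sub hγ hδ ht hs.2]

lemma rlKernel_smul_rlIntegralRight_ae_eq (γ δ t : ℝ) (f : ℝ → E) :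
    (fun τ => rlKernel γ (τ - t) • rlIntegralRight δ b f τ) =ᵐ[volume.restrict (Ioc a b)]
      fun τ => ∫ s in Ioc a b, (rlKernel γ (τ - t) * rlKernel δ (s - τ)) • f s := by
  filter_upwards [ae_restrict_mem measurableSet_Ioc] with τ hτ
  simp only [rlIntegralRight_eq_setIntegral δ f (Ioc_subset_Icc_self hτ), ← integral_smul,
    smul_smul]

lemma integrableOn_rlKernel_smul_rlIntegralRight (hγ : 0 < γ) (hδ : 0 < δ) (ht : a ≤ t)
    (hf : AEStronglyMeasurable f (volume.restrict (Ioc a b)))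
    (hkf : IntegrableOn (fun s => rlKernel (γ + δ) (s - t) • f s) (Ioc a b)) :
    IntegrableOn (fun τ => rlKernel γ (τ - t) • rlIntegralRight δ b f τ) (Ioc a b) :=
  (integrable_prod_rlKernel_mul_rlKernel_smul hγ hδ ht hf hkf).integral_prod_right.congr
    (rlKernel_smul_rlIntegralRight_ae_eq γ δ t f).symm

lemma rlIntegralRight_rlIntegralRight [CompleteSpace E] (hγ : 0 < γ) (hδ : 0 < δ)
    (ht : t ∈ Icc a b) (hf : AEStronglyMeasurable f (volume.restrict (Ioc a b)))
    (hkf : IntegrableOn (fun s => rlKernel (γ + δ) (s - t) • f s) (Ioc a b)) :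
    rlIntegralRight γ b (rlIntegralRight δ b f) t = rlIntegralRight (γ + δ) b f t := by
  rw [rlIntegralRight_eq_setIntegral γ _ ht, rlIntegralRight_eq_setIntegral _ f ht,
    integral_congr_ae (rlKernel_smul_rlIntegralRight_ae_eq γ δ t f),
    ← integral_integral_swap (integrable_prod_rlKernel_mul_rlKernel_smul hγ hδ ht.1 hf hkf)]
  refine setIntegral_congr_fun measurableSet_Ioc fun s hs => ?_
  simp only [integral_smul_const, setIntegral_rlKernel_sub_mul_rlKernel_sub hγ hδ ht.1 hs.2]

end FractionalCalculusOnInterval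

section Duality

variable {E : Type*} [NormedAddCommGroup E] [InnerProductSpace ℝ E] {a b γ : ℝ}
  {f g : ℝ → E}

lemma integrable_inner_of_memLp_top {X : Type*} [MeasurableSpace X] {μ : Measure X} {f g : X → E}
    (hg : Integrable g μ) (hf : MemLp f ⊤ μ) : Integrable (fun x => ⟪g x, f x⟫) μ := by
  refine (hg.norm.mul_const (lpNorm f ⊤ μ)).mono' (hg.1.inner hf.1) ?_
  filter_upwards [ae_le_lpNorm_exponent_top hf] with x hx
  exact (norm_inner_le_norm _ _).trans (mul_le_mul_of_nonneg_left hx (norm_nonneg _))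

lemma integral_inner_rlIntegralRight [CompleteSpace E] (hγ : 0 < γ)
    (hg : IntegrableOn g (Ioc a b)) (hf : MemLp f ⊤ (volume.restrict (Ioc a b))) :
    ∫ t in Ioc a b, ⟪rlIntegralRight γ b g t, f t⟫ =
      ∫ s in Ioc a b, ⟪g s, rlIntegralLeft γ a f s⟫ := by
  have hprod : Integrable (fun p : ℝ × ℝ => rlKernel γ (p.1 - p.2) • g p.1)
      ((volume.restrict (Ioc a b)).prod (volume.restrict (Ioc a b))) :=
    integrable_prod_rlKernel_smul hγ hg
  have hinner : Integrable (fun p : ℝ × ℝ => ⟪rlKernel γ (p.1 - p.2) • g p.1, f p.2⟫)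
      ((volume.restrict (Ioc a b)).prod (volume.restrict (Ioc a b))) :=
    integrable_inner_of_memLp_top hprod (hf.comp_snd _)
  calc ∫ t in Ioc a b, ⟪rlIntegralRight γ b g t, f t⟫
      = ∫ t in Ioc a b, ∫ s in Ioc a b, ⟪rlKernel γ (s - t) • g s, f t⟫ := by
        refine integral_congr_ae ?_
        filter_upwards [ae_restrict_mem measurableSet_Ioc, hprod.prod_left_ae] with t ht hint
        rw [rlIntegralRight_eq_setIntegral γ g (Ioc_subset_Icc_self ht), real_inner_comm,
          ← integral_inner hint]
        simp only [real_inner_comm]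
    _ = ∫ s in Ioc a b, ∫ t in Ioc a b, ⟪rlKernel γ (s - t) • g s, f t⟫ :=
        (integral_integral_swap hinner).symm
    _ = ∫ s in Ioc a b, ⟪g s, rlIntegralLeft γ a f s⟫ := by
        refine setIntegral_congr_fun measurableSet_Ioc fun s hs => ?_
        simp only [rlIntegralLeft_eq_setIntegral γ f (Ioc_subset_Icc_self hs),
          real_inner_smul_left, ← real_inner_smul_right]
        exact integral_inner (integrable_rlKernel_sub_smul hγ s hf) (g s)

end Duality

section AbelEquation

variable {E : Type*} [NormedAddCommGroup E] [NormedSpace ℝ E] {a b t α : ℝ} {F p : ℝ → E} {c : E}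

lemma integrableOn_rlKernel_one_smul (t : ℝ) (hF : IntegrableOn F (Ioc a b)) :
    IntegrableOn (fun s => rlKernel 1 (s - t) • F s) (Ioc a b) := by
  have hker : (fun s => rlKernel 1 (s - t) • F s) = (Ioi t).indicator F := by
    ext s
    by_cases h : t < s <;> simp [rlKernel, h]
  rw [hker]
  exact hF.indicator measurableSet_Ioi

variable [CompleteSpace E]

lemma rlIntegralRight_rlKernel_smul (hα0 : 0 < α) (hα1 : α < 1) (ht : t ∈ Ico a b) (c : E) :
    rlIntegralRight (1 - α) b (fun s => rlKernel α (b - s) • c) t = c := by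
  rw [rlIntegralRight_eq_setIntegral _ _ (Ico_subset_Icc_self ht)]
  simp only [smul_smul]
  rw [integral_smul_const,
    setIntegral_rlKernel_sub_mul_rlKernel_sub (sub_pos.mpr hα1) hα0 ht.1 le_rfl, sub_add_cancel,
    rlKernel_one_of_pos (sub_pos.mpr ht.2), one_smul]

lemma rlIntegralRight_one_sub_of_ae_eq (hα0 : 0 < α) (hα1 : α < 1) (ht : t ∈ Ico a b)
    (hF : IntegrableOn F (Ioc a b))
    (hp : p =ᵐ[volume.restrict (Ioc a b)] fun s =>
      -(rlKernel α (b - s) • c + rlIntegralRight α b F s)) :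
    rlIntegralRight (1 - α) b p t = -(c + ∫ s in t..b, F s) := by
  have hα' : 0 < 1 - α := sub_pos.mpr hα1
  have htI : t ∈ Icc a b := Ico_subset_Icc_self ht
  have hkF : IntegrableOn (fun s => rlKernel (1 - α + α) (s - t) • F s) (Ioc a b) := by
    rw [sub_add_cancel]
    exact integrableOn_rlKernel_one_smul t hF
  have hconst : IntegrableOn (fun s => rlKernel (1 - α) (s - t) • rlKernel α (b - s) • c)
      (Ioc a b) := by
    simp only [smul_smul]
    exact Integrable.smul_const (integrable_rlKernel_sub_mul_rlKernel_sub hα' hα0 b t).restrict c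
  calc rlIntegralRight (1 - α) b p t
      = ∫ s in Ioc a b, -(rlKernel (1 - α) (s - t) • rlKernel α (b - s) • c +
          rlKernel (1 - α) (s - t) • rlIntegralRight α b F s) := by
        rw [rlIntegralRight_eq_setIntegral _ _ htI]
        refine integral_congr_ae ?_
        filter_upwards [hp] with s hs
        rw [hs, smul_neg, smul_add]
    _ = -(rlIntegralRight (1 - α) b (fun s => rlKernel α (b - s) • c) t +
          rlIntegralRight (1 - α) b (rlIntegralRight α b F) t) := by
        rw [integral_neg, integral_add hconst
          (integrableOn_rlKernel_smul_rlIntegralRight hα' hα0 ht.1 hF.1 hkF),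
          rlIntegralRight_eq_setIntegral _ _ htI, rlIntegralRight_eq_setIntegral _ _ htI]
    _ = -(c + ∫ s in t..b, F s) := by
        rw [rlIntegralRight_rlKernel_smul hα0 hα1 ht,
          rlIntegralRight_rlIntegralRight hα' hα0 htI hF.1 hkF, sub_add_cancel, rlIntegralRight_one]

end AbelEquation

section EssentiallyBounded

variable {X E F : Type*} [MeasurableSpace X] {μ : Measure X} [NormedAddCommGroup E]

lemma memLp_top_comp_of_continuous [ProperSpace E] [NormedAddCommGroup F] {g : E → F} {f : X → E}
    (hg : Continuous g) (hf : MemLp f ⊤ μ) : MemLp (fun x => g (f x)) ⊤ μ := by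
  obtain ⟨C, hC⟩ := (isCompact_closedBall (0 : E) (lpNorm f ⊤ μ)).exists_bound_of_continuousOn
    hg.continuousOn
  refine memLp_top_of_bound (hg.comp_aestronglyMeasurable hf.1) C ?_
  filter_upwards [ae_le_lpNorm_exponent_top hf] with x hx
  exact hC _ (mem_closedBall_zero_iff.mpr hx)

variable [NormedSpace ℝ E] {L : E → ℝ}

lemma hasDerivAt_comp_add_smul {z v : E} {ε : ℝ} (hL : DifferentiableAt ℝ L (z + ε • v)) :
    HasDerivAt (fun ε : ℝ => L (z + ε • v)) (fderiv ℝ L (z + ε • v) v) ε := by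
  have hline : HasDerivAt (fun ε : ℝ => z + ε • v) v ε := by
    simpa using ((hasDerivAt_id ε).smul_const v).const_add z
  exact hL.hasFDerivAt.comp_hasDerivAt ε hline

variable [FiniteDimensional ℝ E] {w : X → ℝ} {Z V : X → E}

lemma exists_bound_fderiv_add_smul (hL : ContDiff ℝ 1 L) (hZ : MemLp Z ⊤ μ) (hV : MemLp V ⊤ μ) :
    ∃ C, ∀ᵐ x ∂μ, ∀ ε ∈ Metric.ball (0 : ℝ) 1, ‖fderiv ℝ L (Z x + ε • V x) (V x)‖ ≤ C := by
  have : ProperSpace E := FiniteDimensional.proper_real E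
  obtain ⟨C, hC⟩ := ((isCompact_closedBall (0 : E) (lpNorm Z ⊤ μ + lpNorm V ⊤ μ)).prod
    (isCompact_closedBall (0 : E) (lpNorm V ⊤ μ))).exists_bound_of_continuousOn
    (hL.continuous_fderiv_apply one_ne_zero).continuousOn
  refine ⟨C, ?_⟩
  filter_upwards [ae_le_lpNorm_exponent_top hZ, ae_le_lpNorm_exponent_top hV] with x hZx hVx ε hε
  refine hC (Z x + ε • V x, V x) ⟨mem_closedBall_zero_iff.mpr ?_, mem_closedBall_zero_iff.mpr hVx⟩
  calc ‖Z x + ε • V x‖ ≤ ‖Z x‖ + ‖ε‖ * ‖V x‖ := (norm_add_le _ _).trans_eq (by rw [norm_smul])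
    _ ≤ lpNorm Z ⊤ μ + 1 * lpNorm V ⊤ μ := by
        gcongr
        exact (mem_ball_zero_iff.mp hε).le
    _ = lpNorm Z ⊤ μ + lpNorm V ⊤ μ := by rw [one_mul]

lemma hasDerivAt_integral_mul_comp_add_smul (hw : Integrable w μ) (hL : ContDiff ℝ 1 L)
    (hZ : MemLp Z ⊤ μ) (hV : MemLp V ⊤ μ) :
    HasDerivAt (fun ε : ℝ => ∫ x, w x * L (Z x + ε • V x) ∂μ)
      (∫ x, w x * fderiv ℝ L (Z x) (V x) ∂μ) 0 := by
  have : ProperSpace E := FiniteDimensional.proper_real E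
  obtain ⟨C, hC⟩ := exists_bound_fderiv_add_smul hL hZ hV
  have hmem (ε : ℝ) : MemLp (fun x => Z x + ε • V x) ⊤ μ := hZ.add (hV.const_smul ε)
  have hint (ε : ℝ) : Integrable (fun x => w x * L (Z x + ε • V x)) μ :=
    hw.mul_of_top_left (memLp_top_comp_of_continuous hL.continuous (hmem ε))
  have hmeas : AEStronglyMeasurable (fun x => w x * fderiv ℝ L (Z x + (0 : ℝ) • V x) (V x)) μ :=
    hw.1.mul ((hL.continuous_fderiv_apply one_ne_zero).comp_aestronglyMeasurable
      ((hmem 0).1.prodMk hV.1))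
  have hbound : ∀ᵐ x ∂μ, ∀ ε ∈ Metric.ball (0 : ℝ) 1,
      ‖w x * fderiv ℝ L (Z x + ε • V x) (V x)‖ ≤ ‖w x‖ * C := by
    filter_upwards [hC] with x hx ε hε
    rw [norm_mul]
    exact mul_le_mul_of_nonneg_left (hx ε hε) (norm_nonneg _)
  have hderiv := hasDerivAt_integral_of_dominated_loc_of_deriv_le
    (F := fun ε x => w x * L (Z x + ε • V x)) (Metric.ball_mem_nhds 0 one_pos)
    (.of_forall fun ε => (hint ε).1) (hint 0) hmeas hbound (hw.norm.mul_const C)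
    (.of_forall fun x ε _ =>
      (hasDerivAt_comp_add_smul (hL.differentiable one_ne_zero _)).const_mul _)
  simpa only [zero_smul, add_zero] using hderiv.2

end EssentiallyBounded

section PartialGradient

variable {E V : Type*} [NormedAddCommGroup E] [InnerProductSpace ℝ E] [CompleteSpace E]
  [NormedAddCommGroup V] [NormedSpace ℝ V] {f : V → ℝ}

/-- The gradient of `f` at `p` in the directions parametrized by `ι`. The partial gradients of a
function on a product are obtained by letting `ι` be the inclusions of the factors. -/
noncomputable def gradientAlong (f : V → ℝ) (ι : E →L[ℝ] V) (p : V) : E :=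
  (InnerProductSpace.toDual ℝ E).symm ((fderiv ℝ f p).comp ι)

lemma inner_gradientAlong (f : V → ℝ) (ι : E →L[ℝ] V) (p : V) (v : E) :
    ⟪gradientAlong f ι p, v⟫ = fderiv ℝ f p (ι v) := by
  simp [gradientAlong]

lemma continuous_gradientAlong (hf : ContDiff ℝ 1 f) (ι : E →L[ℝ] V) :
    Continuous (gradientAlong f ι) :=
  (LinearIsometryEquiv.continuous _).comp
    ((hf.continuous_fderiv one_ne_zero).clm_comp continuous_const)

lemma gradient_comp_eq_gradientAlong {g : E → V} {ι : E →L[ℝ] V} {z : E}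
    (hf : DifferentiableAt ℝ f (g z)) (hg : HasFDerivAt g ι z) :
    gradient (fun z => f (g z)) z = gradientAlong f ι (g z) := by
  have hcomp : HasFDerivAt (fun z => f (g z)) ((fderiv ℝ f (g z)).comp ι) z :=
    hf.hasFDerivAt.comp z hg
  rw [gradient, hcomp.fderiv, gradientAlong]

end PartialGradient

lemma ae_eq_zero_of_forall_integral_inner_indicator_eq_zero {X E : Type*} [MeasurableSpace X]
    {μ : Measure X} [NormedAddCommGroup E] [InnerProductSpace ℝ E] [CompleteSpace E] {h : X → E}
    (hh : Integrable h μ)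
    (hzero : ∀ S, MeasurableSet S → ∀ c, ∫ x, ⟪h x, S.indicator (fun _ => c) x⟫ ∂μ = 0) :
    h =ᵐ[μ] 0 := by
  refine hh.ae_eq_zero_of_forall_setIntegral_eq_zero fun S hS _ => ext_inner_left ℝ fun c => ?_
  rw [← integral_inner hh.integrableOn, inner_zero_right, ← hzero S hS c,
    ← integral_indicator hS]
  congr 1 with x
  by_cases hx : x ∈ S <;> simp [hx, real_inner_comm]

section BolzaProblem

variable {n : ℕ} {a b α β : ℝ} {φ : EuclideanSpace ℝ (Fin n) × EuclideanSpace ℝ (Fin n) → ℝ}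
  {L : EuclideanSpace ℝ (Fin n) × EuclideanSpace ℝ (Fin n) × ℝ → ℝ}
  {u v : ℝ → EuclideanSpace ℝ (Fin n)} {y : EuclideanSpace ℝ (Fin n)}

lemma admissible.memLp_top (hu : admissible n a b u) : MemLp u ⊤ (volume.restrict (Ioc a b)) := by
  obtain ⟨hmeas, C, hC⟩ := hu
  refine memLp_top_of_bound hmeas.aestronglyMeasurable C ?_
  filter_upwards [ae_restrict_of_ae hC, ae_restrict_mem measurableSet_Ioc] with s hs hmem
  exact hs (Ioc_subset_Icc_self hmem)

lemma admissible.add_const_smul (hu : admissible n a b u) (hv : admissible n a b v) (ε : ℝ) :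
    admissible n a b fun t => u t + ε • v t := by
  obtain ⟨⟨humeas, C, hC⟩, ⟨hvmeas, D, hD⟩⟩ := hu, hv
  refine ⟨by fun_prop, C + ‖ε‖ * D, ?_⟩
  filter_upwards [hC, hD] with s hCs hDs hs
  refine (norm_add_le _ _).trans ?_
  rw [norm_smul]
  gcongr
  exacts [hCs hs, hDs hs]

lemma admissible_indicator_const (n : ℕ) (a b : ℝ) {S : Set ℝ} (hS : MeasurableSet S)
    (c : EuclideanSpace ℝ (Fin n)) : admissible n a b (S.indicator fun _ => c) :=
  ⟨measurable_const.indicator hS, ‖c‖, .of_forall fun _ _ => norm_indicator_le_norm_self _ _⟩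

/-- The force `∂₁L` along the trajectory of `(u, y)`, weighted by the kernel of the Bolza cost. -/
noncomputable def weightedForce (a b α β : ℝ)
    (L : EuclideanSpace ℝ (Fin n) × EuclideanSpace ℝ (Fin n) × ℝ → ℝ)
    (u : ℝ → EuclideanSpace ℝ (Fin n)) (y : EuclideanSpace ℝ (Fin n)) (s : ℝ) :
    EuclideanSpace ℝ (Fin n) :=
  ((b - s) ^ (β - 1) / Real.Gamma β) • gradient (fun z => L (z, u s, s)) (traj n a α u y s)

/-- The momentum `∂₂L` along the trajectory of `(u, y)`, weighted by the kernel of the Bolza cost;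
this is the function `p̃` of the Euler–Lagrange equation. -/
noncomputable def weightedMomentum (a b α β : ℝ)
    (L : EuclideanSpace ℝ (Fin n) × EuclideanSpace ℝ (Fin n) × ℝ → ℝ)
    (u : ℝ → EuclideanSpace ℝ (Fin n)) (y : EuclideanSpace ℝ (Fin n)) (s : ℝ) :
    EuclideanSpace ℝ (Fin n) :=
  ((b - s) ^ (β - 1) / Real.Gamma β) • gradient (fun z => L (traj n a α u y s, z, s)) (u s)

/-- The partial gradient `∂₂φ` at the endpoints of the trajectory of `(u, y)`. -/
noncomputable def endpointGradient (a b α : ℝ)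
    (φ : EuclideanSpace ℝ (Fin n) × EuclideanSpace ℝ (Fin n) → ℝ)
    (u : ℝ → EuclideanSpace ℝ (Fin n)) (y : EuclideanSpace ℝ (Fin n)) :
    EuclideanSpace ℝ (Fin n) :=
  gradientAlong φ (.inr ℝ _ _) (y, traj n a α u y b)

lemma memLp_top_traj (hα : 0 < α) (hu : MemLp u ⊤ (volume.restrict (Ioc a b)))
    (y : EuclideanSpace ℝ (Fin n)) : MemLp (traj n a α u y) ⊤ (volume.restrict (Ioc a b)) :=
  (memLp_const y).add (memLp_top_rlIntegralLeft hα hu)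

lemma memLp_top_id_Ioc (a b : ℝ) : MemLp (fun s : ℝ => s) ⊤ (volume.restrict (Ioc a b)) := by
  refine memLp_top_of_bound measurable_id.aestronglyMeasurable (max |a| |b|) ?_
  filter_upwards [ae_restrict_mem measurableSet_Ioc] with s hs
  exact abs_le_max_abs_abs hs.1.le hs.2

lemma memLp_top_lagrangianArgument (hα : 0 < α) (hu : MemLp u ⊤ (volume.restrict (Ioc a b)))
    (y : EuclideanSpace ℝ (Fin n)) :
    MemLp (fun s => (traj n a α u y s, u s, s)) ⊤ (volume.restrict (Ioc a b)) :=
  .of_fst_snd ⟨memLp_top_traj hα hu y, .of_fst_snd ⟨hu, memLp_top_id_Ioc a b⟩⟩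

lemma memLp_top_lagrangianVariation (hα : 0 < α) (hv : MemLp v ⊤ (volume.restrict (Ioc a b))) :
    MemLp (fun s => (rlIntegralLeft α a v s, v s, (0 : ℝ))) ⊤ (volume.restrict (Ioc a b)) :=
  .of_fst_snd ⟨memLp_top_rlIntegralLeft hα hv, .of_fst_snd ⟨hv, .zero⟩⟩

lemma integrableOn_sub_rpow_div_Gamma (hβ : 0 < β) (a b : ℝ) :
    IntegrableOn (fun s => (b - s) ^ (β - 1) / Real.Gamma β) (Ioc a b) := by
  rw [integrableOn_Ioc_iff_integrableOn_Ioo]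
  exact ((integrableOn_rlKernel_sub_left hβ b a b).mono_set Ioo_subset_Ioc_self).congr_fun
    (fun s hs => rlKernel_of_pos (sub_pos.mpr hs.2)) measurableSet_Ioo

lemma weightedForce_eq_smul_gradientAlong (hL : Differentiable ℝ L) (s : ℝ) :
    weightedForce a b α β L u y s = ((b - s) ^ (β - 1) / Real.Gamma β) •
      gradientAlong L (.inl ℝ _ _) (traj n a α u y s, u s, s) := by
  rw [weightedForce, gradient_comp_eq_gradientAlong (hL _) (hasFDerivAt_prodMk_left _ _)]

lemma weightedMomentum_eq_smul_gradientAlong (hL : Differentiable ℝ L) (s : ℝ) :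
    weightedMomentum a b α β L u y s = ((b - s) ^ (β - 1) / Real.Gamma β) •
      gradientAlong L ((ContinuousLinearMap.inr ℝ _ _).comp (.inl ℝ _ _))
        (traj n a α u y s, u s, s) := by
  rw [weightedMomentum, gradient_comp_eq_gradientAlong (g := fun z => (traj n a α u y s, z, s))
    (hL _) ((hasFDerivAt_prodMk_right _ _).comp _ (hasFDerivAt_prodMk_left _ _))]

lemma integrableOn_weightedForce (hα : 0 < α) (hβ : 0 < β) (hL : ContDiff ℝ 1 L)
    (hu : MemLp u ⊤ (volume.restrict (Ioc a b))) (y : EuclideanSpace ℝ (Fin n)) :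
    IntegrableOn (weightedForce a b α β L u y) (Ioc a b) := by
  simp only [funext (weightedForce_eq_smul_gradientAlong (hL.differentiable one_ne_zero))]
  exact (integrableOn_sub_rpow_div_Gamma hβ a b).smul_of_top_left
    (memLp_top_comp_of_continuous (continuous_gradientAlong hL _)
      (memLp_top_lagrangianArgument hα hu y))

lemma integrableOn_weightedMomentum (hα : 0 < α) (hβ : 0 < β) (hL : ContDiff ℝ 1 L)
    (hu : MemLp u ⊤ (volume.restrict (Ioc a b))) (y : EuclideanSpace ℝ (Fin n)) :
    IntegrableOn (weightedMomentum a b α β L u y) (Ioc a b) := by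
  simp only [funext (weightedMomentum_eq_smul_gradientAlong (hL.differentiable one_ne_zero))]
  exact (integrableOn_sub_rpow_div_Gamma hβ a b).smul_of_top_left
    (memLp_top_comp_of_continuous (continuous_gradientAlong hL _)
      (memLp_top_lagrangianArgument hα hu y))

lemma traj_add_const_smul (hα : 0 < α) (hu : MemLp u ⊤ (volume.restrict (Ioc a b)))
    (hv : MemLp v ⊤ (volume.restrict (Ioc a b))) (ε : ℝ) {s : ℝ} (hs : s ∈ Icc a b) :
    traj n a α (fun t => u t + ε • v t) y s =
      traj n a α u y s + ε • rlIntegralLeft α a v s := by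
  change y + rlIntegralLeft α a (fun t => u t + ε • v t) s = y + rlIntegralLeft α a u s + _
  rw [rlIntegralLeft_add_const_smul hα hu hv ε hs, add_assoc]

lemma bolza_add_const_smul (hab : a ≤ b) (hα : 0 < α)
    (hu : MemLp u ⊤ (volume.restrict (Ioc a b))) (hv : MemLp v ⊤ (volume.restrict (Ioc a b)))
    (ε : ℝ) :
    bolza n a b α β φ L (fun t => u t + ε • v t) y =
      φ ((y, traj n a α u y b) + ε • (0, rlIntegralLeft α a v b)) +
        ∫ s in Ioc a b, ((b - s) ^ (β - 1) / Real.Gamma β) *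
          L ((traj n a α u y s, u s, s) + ε • (rlIntegralLeft α a v s, v s, 0)) := by
  rw [bolza, traj_add_const_smul hα hu hv ε (right_mem_Icc.mpr hab),
    intervalIntegral.integral_of_le hab]
  congr 1
  · simp
  · refine setIntegral_congr_fun measurableSet_Ioc fun s hs => ?_
    simp [traj_add_const_smul hα hu hv ε (Ioc_subset_Icc_self hs)]

lemma mul_fderiv_lagrangian_apply_eq_inner_add_inner (hL : Differentiable ℝ L) (s : ℝ)
    (ξ η : EuclideanSpace ℝ (Fin n)) :
    ((b - s) ^ (β - 1) / Real.Gamma β) * fderiv ℝ L (traj n a α u y s, u s, s) (ξ, η, 0) =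
      ⟪weightedForce a b α β L u y s, ξ⟫ + ⟪weightedMomentum a b α β L u y s, η⟫ := by
  rw [weightedForce_eq_smul_gradientAlong hL, weightedMomentum_eq_smul_gradientAlong hL,
    real_inner_smul_left, real_inner_smul_left, inner_gradientAlong, inner_gradientAlong,
    ← mul_add, ← map_add]
  simp

/-- The `L¹` density of the first variation of the Bolza functional with respect to `u`. -/
noncomputable def bolzaGradient (a b α β : ℝ)
    (φ : EuclideanSpace ℝ (Fin n) × EuclideanSpace ℝ (Fin n) → ℝ)
    (L : EuclideanSpace ℝ (Fin n) × EuclideanSpace ℝ (Fin n) × ℝ → ℝ)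
    (u : ℝ → EuclideanSpace ℝ (Fin n)) (y : EuclideanSpace ℝ (Fin n)) (t : ℝ) :
    EuclideanSpace ℝ (Fin n) :=
  rlKernel α (b - t) • endpointGradient a b α φ u y +
    rlIntegralRight α b (weightedForce a b α β L u y) t + weightedMomentum a b α β L u y t

lemma integrableOn_bolzaGradient (hα : 0 < α) (hβ : 0 < β) (hL : ContDiff ℝ 1 L)
    (hu : MemLp u ⊤ (volume.restrict (Ioc a b))) (y : EuclideanSpace ℝ (Fin n)) :
    IntegrableOn (bolzaGradient a b α β φ L u y) (Ioc a b) :=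
  (((integrableOn_rlKernel_sub_left hα b a b).smul_const _).add
    (integrableOn_rlIntegralRight hα (integrableOn_weightedForce hα hβ hL hu y))).add
    (integrableOn_weightedMomentum hα hβ hL hu y)

lemma fderiv_endpoint_apply_eq_integral_inner (hab : a ≤ b) (hα : 0 < α)
    (hv : MemLp v ⊤ (volume.restrict (Ioc a b))) :
    fderiv ℝ φ (y, traj n a α u y b) (0, rlIntegralLeft α a v b) =
      ∫ t in Ioc a b, ⟪rlKernel α (b - t) • endpointGradient a b α φ u y, v t⟫ := by
  simp only [real_inner_smul_left, ← real_inner_smul_right]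
  rw [integral_inner (integrable_rlKernel_sub_smul hα b hv), endpointGradient,
    ← rlIntegralLeft_eq_setIntegral α v (right_mem_Icc.mpr hab), inner_gradientAlong]
  simp

lemma integral_inner_bolzaGradient (hab : a ≤ b) (hα : 0 < α) (hβ : 0 < β) (hL : ContDiff ℝ 1 L)
    (hu : MemLp u ⊤ (volume.restrict (Ioc a b))) (hv : MemLp v ⊤ (volume.restrict (Ioc a b))) :
    ∫ t in Ioc a b, ⟪bolzaGradient a b α β φ L u y t, v t⟫ =
      fderiv ℝ φ (y, traj n a α u y b) (0, rlIntegralLeft α a v b) +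
        ∫ s in Ioc a b, ((b - s) ^ (β - 1) / Real.Gamma β) *
          fderiv ℝ L (traj n a α u y s, u s, s) (rlIntegralLeft α a v s, v s, 0) := by
  have hF := integrableOn_weightedForce hα hβ hL hu y
  have hc : IntegrableOn (fun t => rlKernel α (b - t) • endpointGradient a b α φ u y) (Ioc a b) :=
    (integrableOn_rlKernel_sub_left hα b a b).smul_const _
  have hcv := integrable_inner_of_memLp_top hc hv
  have hIFv := integrable_inner_of_memLp_top (integrableOn_rlIntegralRight hα hF) hv
  have hFIv := integrable_inner_of_memLp_top hF (memLp_top_rlIntegralLeft hα hv)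
  have hpv := integrable_inner_of_memLp_top (integrableOn_weightedMomentum hα hβ hL hu y) hv
  calc ∫ t in Ioc a b, ⟪bolzaGradient a b α β φ L u y t, v t⟫
      = (∫ t in Ioc a b, ⟪rlKernel α (b - t) • endpointGradient a b α φ u y, v t⟫) +
          (∫ t in Ioc a b, ⟪rlIntegralRight α b (weightedForce a b α β L u y) t, v t⟫) +
          ∫ t in Ioc a b, ⟪weightedMomentum a b α β L u y t, v t⟫ := by
        simp only [bolzaGradient, inner_add_left]
        rw [← integral_add hcv hIFv]
        exact integral_add (hcv.add hIFv) hpv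
    _ = fderiv ℝ φ (y, traj n a α u y b) (0, rlIntegralLeft α a v b) +
          ((∫ s in Ioc a b, ⟪weightedForce a b α β L u y s, rlIntegralLeft α a v s⟫) +
            ∫ t in Ioc a b, ⟪weightedMomentum a b α β L u y t, v t⟫) := by
        rw [fderiv_endpoint_apply_eq_integral_inner hab hα hv,
          integral_inner_rlIntegralRight hα hF hv, add_assoc]
    _ = _ := by
        rw [← integral_add hFIv hpv]
        simp only [mul_fderiv_lagrangian_apply_eq_inner_add_inner (hL.differentiable one_ne_zero)]

lemma hasDerivAt_bolza (hab : a ≤ b) (hα : 0 < α) (hβ : 0 < β)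
    (hφ : DifferentiableAt ℝ φ (y, traj n a α u y b)) (hL : ContDiff ℝ 1 L)
    (hu : MemLp u ⊤ (volume.restrict (Ioc a b))) (hv : MemLp v ⊤ (volume.restrict (Ioc a b))) :
    HasDerivAt (fun ε : ℝ => bolza n a b α β φ L (fun t => u t + ε • v t) y)
      (∫ t in Ioc a b, ⟪bolzaGradient a b α β φ L u y t, v t⟫) 0 := by
  have hcost : HasDerivAt
      (fun ε : ℝ => φ ((y, traj n a α u y b) + ε • (0, rlIntegralLeft α a v b)))
      (fderiv ℝ φ (y, traj n a α u y b) (0, rlIntegralLeft α a v b)) 0 := by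
    simpa using hasDerivAt_comp_add_smul (z := (y, traj n a α u y b))
      (v := (0, rlIntegralLeft α a v b)) (ε := 0) (by simpa using hφ)
  rw [integral_inner_bolzaGradient hab hα hβ hL hu hv,
    funext (bolza_add_const_smul hab hα hu hv)]
  exact hcost.add (hasDerivAt_integral_mul_comp_add_smul (integrableOn_sub_rpow_div_Gamma hβ a b) hL
    (memLp_top_lagrangianArgument hα hu y) (memLp_top_lagrangianVariation hα hv))

lemma weightedMomentum_ae_eq (hab : a ≤ b) (hα : 0 < α) (hβ : 0 < β)
    (hφ : DifferentiableAt ℝ φ (y, traj n a α u y b)) (hL : ContDiff ℝ 1 L)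
    (hu : MemLp u ⊤ (volume.restrict (Ioc a b)))
    (hcrit : ∀ v, admissible n a b v →
      deriv (fun ε : ℝ => bolza n a b α β φ L (fun t => u t + ε • v t) y) 0 = 0) :
    weightedMomentum a b α β L u y =ᵐ[volume.restrict (Ioc a b)] fun t =>
      -(rlKernel α (b - t) • endpointGradient a b α φ u y +
        rlIntegralRight α b (weightedForce a b α β L u y) t) := by
  have hzero : bolzaGradient a b α β φ L u y =ᵐ[volume.restrict (Ioc a b)] 0 := by
    refine ae_eq_zero_of_forall_integral_inner_indicator_eq_zero
      (integrableOn_bolzaGradient hα hβ hL hu y) fun S hS c => ?_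
    have hv := admissible_indicator_const n a b hS c
    rw [← (hasDerivAt_bolza hab hα hβ hφ hL hu hv.memLp_top).deriv, hcrit _ hv]
  filter_upwards [hzero] with t ht
  exact eq_neg_of_add_eq_zero_right ht

lemma rlIntegralRight_weightedMomentum (γ t : ℝ) :
    rlIntegralRight (1 - γ) b (weightedMomentum a b α β L u y) t =
      ∫ s in t..b, (((s - t) ^ (-γ) / Real.Gamma (1 - γ)) *
        ((b - s) ^ (β - 1) / Real.Gamma β)) •
          gradient (fun z => L (traj n a α u y s, z, s)) (u s) := by
  simp only [rlIntegralRight, weightedMomentum, smul_smul, sub_sub_cancel_left]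

end BolzaProblem

theorem stmt_6_general {n : ℕ} {a b α β : ℝ} (hab : a ≤ b) (hα : 0 < α) (hβ : 0 < β)
    {φ : EuclideanSpace ℝ (Fin n) × EuclideanSpace ℝ (Fin n) → ℝ}
    {L : EuclideanSpace ℝ (Fin n) × EuclideanSpace ℝ (Fin n) × ℝ → ℝ}
    {u : ℝ → EuclideanSpace ℝ (Fin n)} {y : EuclideanSpace ℝ (Fin n)}
    (hφ : DifferentiableAt ℝ φ (y, traj n a α u y b)) (hL : ContDiff ℝ 1 L)
    (hadm : admissible n a b u)
    (hcrit : ∀ v, admissible n a b v →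
      deriv (fun ε : ℝ => bolza n a b α β φ L (fun t => u t + ε • v t) y) 0 = 0) :
    ∃ q : ℝ → EuclideanSpace ℝ (Fin n),
      IntervalIntegrable (fun s => ((b - s) ^ (β - 1) / Real.Gamma β) •
          gradient (fun z => L (z, u s, s)) (traj n a α u y s)) volume a b ∧
      (∀ t ∈ Icc a b, q t = q a + ∫ s in a..t,
          ((b - s) ^ (β - 1) / Real.Gamma β) •
            gradient (fun z => L (z, u s, s)) (traj n a α u y s)) ∧
      (α < 1 → ∀ᵐ t ∂(volume.restrict (Icc a b)),
          q t = ∫ s in t..b, (((s - t) ^ (-α) / Real.Gamma (1 - α)) *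
              ((b - s) ^ (β - 1) / Real.Gamma β)) •
            gradient (fun z => L (traj n a α u y s, z, s)) (u s)) ∧
      (α = 1 → ∀ᵐ t ∂(volume.restrict (Icc a b)),
          q t = ((b - t) ^ (β - 1) / Real.Gamma β) •
            gradient (fun z => L (traj n a α u y t, z, t)) (u t)) := by
  set F := weightedForce a b α β L u y
  set c := endpointGradient a b α φ u y
  have hF : IntegrableOn F (Ioc a b) := integrableOn_weightedForce hα hβ hL hadm.memLp_top y
  have hFab : IntervalIntegrable F volume a b :=
    (intervalIntegrable_iff_integrableOn_Ioc_of_le hab).mpr hF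
  have hp : weightedMomentum a b α β L u y =ᵐ[volume.restrict (Ioc a b)] fun t =>
      -(rlKernel α (b - t) • c + rlIntegralRight α b F t) :=
    weightedMomentum_ae_eq hab hα hβ hφ hL hadm.memLp_top hcrit
  refine ⟨fun t => -(c + ∫ s in t..b, F s), hFab, fun t ht => ?_, fun hα1 => ?_, fun hα1 => ?_⟩
  · have hsplit : (∫ s in a..t, F s) + ∫ s in t..b, F s = ∫ s in a..b, F s :=
      intervalIntegral.integral_add_adjacent_intervals
        (hFab.mono_set (uIcc_subset_uIcc_left (Icc_subset_uIcc ht)))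
        (hFab.mono_set (uIcc_subset_uIcc_right (Icc_subset_uIcc ht)))
    change -(c + ∫ s in t..b, F s) = -(c + ∫ s in a..b, F s) + ∫ s in a..t, F s
    rw [← hsplit]
    abel
  · rw [Measure.restrict_congr_set Ico_ae_eq_Icc.symm]
    filter_upwards [ae_restrict_mem measurableSet_Ico] with t ht
    rw [← rlIntegralRight_weightedMomentum, rlIntegralRight_one_sub_of_ae_eq hα hα1 ht hF hp]
  · subst hα1
    rw [Measure.restrict_congr_set Ioo_ae_eq_Icc.symm]
    filter_upwards [ae_restrict_of_ae_restrict_of_subset Ioo_subset_Ioc_self hp,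
      ae_restrict_mem measurableSet_Ioo] with t hpt ht
    rw [rlKernel_one_of_pos (sub_pos.mpr ht.2), one_smul, rlIntegralRight_one] at hpt
    exact hpt.symm

theorem stmt_6 (n : ℕ) (hn : 1 ≤ n) (a b : ℝ) (hab : a < b)
    (α β : ℝ) (hα0 : 0 < α) (hα1 : α ≤ 1) (hβ : 0 < β)
    (φ : EuclideanSpace ℝ (Fin n) × EuclideanSpace ℝ (Fin n) → ℝ)
    (L : EuclideanSpace ℝ (Fin n) × EuclideanSpace ℝ (Fin n) × ℝ → ℝ)
    (hφ : ContDiff ℝ 2 φ) (hL : ContDiff ℝ 2 L)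
    (u : ℝ → EuclideanSpace ℝ (Fin n)) (y : EuclideanSpace ℝ (Fin n))
    (hadm : admissible n a b u)
    (hmin : ∀ u' : ℝ → EuclideanSpace ℝ (Fin n), ∀ y' : EuclideanSpace ℝ (Fin n),
      admissible n a b u' → bolza n a b α β φ L u y ≤ bolza n a b α β φ L u' y') :
    ∃ q : ℝ → EuclideanSpace ℝ (Fin n),
      IntervalIntegrable (fun s => ((b - s) ^ (β - 1) / Real.Gamma β) •
          gradient (fun z => L (z, u s, s)) (traj n a α u y s)) volume a b ∧
      (∀ t ∈ Icc a b, q t = q a + ∫ s in a..t,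
          ((b - s) ^ (β - 1) / Real.Gamma β) •
            gradient (fun z => L (z, u s, s)) (traj n a α u y s)) ∧
      (α < 1 → ∀ᵐ t ∂(volume.restrict (Icc a b)),
          q t = ∫ s in t..b, (((s - t) ^ (-α) / Real.Gamma (1 - α)) *
              ((b - s) ^ (β - 1) / Real.Gamma β)) •
            gradient (fun z => L (traj n a α u y s, z, s)) (u s)) ∧
      (α = 1 → ∀ᵐ t ∂(volume.restrict (Icc a b)),
          q t = ((b - t) ^ (β - 1) / Real.Gamma β) •
            gradient (fun z => L (traj n a α u y t, z, t)) (u t)) :=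
  stmt_6_general hab.le hα0 hβ (hφ.differentiable two_ne_zero _) (hL.of_le one_le_two) hadm
    fun v hv => IsLocalMin.deriv_eq_zero <| .of_forall fun ε => by
      simpa using hmin _ y (hadm.add_const_smul hv ε)
end

section
/- (Legendre condition, unconstrained case.) Let 0 < α ≤ 1 and β > 0, and let φ : ℝⁿ×ℝⁿ → ℝ and L : ℝⁿ×ℝⁿ×[a,b] → ℝ be of class C². For (u',y') ∈ L^∞([a,b],ℝⁿ)×ℝⁿ set x(t,u',y') := y' + ∫_a^t ((t−s)^{α−1}/Γ(α)) u'(s) ds and 𝓛(u',y') := φ(y', x(b,u',y')) + ∫_a^b ((b−s)^{β−1}/Γ(β)) L( x(s,u',y'), u'(s), s ) ds. Suppose (u,y) ∈ L^∞([a,b],ℝⁿ)×ℝⁿ satisfies 𝓛(u,y) ≤ 𝓛(u',y') for all (u',y') ∈ L^∞([a,b],ℝⁿ)×ℝⁿ, and write x := x(·,u,y). Then for almost every t ∈ [a,b], the matrix ((b−t)^{β−1}/Γ(β)) ∂²₂₂L(x(t),u(t),t) is positive semidefinite, i.e. vᵀ ((b−t)^{β−1}/Γ(β)) ∂²₂₂L(x(t),u(t),t)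 v ≥ 0 for all v ∈ ℝⁿ. -/
open MeasureTheory Set
open scoped RealInnerProductSpace

/-!
Perturb the optimal control `u` to `u + ε • h`, where `ε` is a `±1`-valued square wave of high
frequency. Since `ε` tends weakly-* to `0`, the perturbed trajectory converges pointwise to that of
`u`: the integral defining it is linear in the control, with integrable kernel. The cost, which
depends nonlinearly on the control, instead converges to the average of the costs with `u + h` and
`u - h` substituted in `L` along the unperturbed trajectory. Minimality therefore forces the
weighted integral of the second differences of `L` in the control variable to be nonnegative.
Choosing `h` constant on an arbitrary measurable set makes the second difference itself nonnegative
almost everywhere, simultaneously for a countable dense set of directions and hence for all of them.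
The second derivative at `0` along each line then inherits the sign.
-/

open Filter Topology
open scoped ENNReal

section Translation

variable {G E : Type*} [AddCommGroup G] [TopologicalSpace G] [IsTopologicalAddGroup G]
  [MeasurableSpace G] [BorelSpace G] [NormedAddCommGroup E]
  {μ : Measure G} [μ.IsAddLeftInvariant] [IsLocallyFiniteMeasure μ] [μ.InnerRegularCompactLTTop]

theorem tendsto_integral_norm_sub_comp_add_left {f : G → E} (hf : Integrable f μ) :
    Tendsto (fun h => ∫ t, ‖f t - f (h + t)‖ ∂μ) (𝓝 0) (𝓝 0) := by
  have : Fact ((1 : ℝ≥0∞) ≠ ∞) := ⟨ENNReal.one_ne_top⟩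
  set F : Lp E 1 μ := (memLp_one_iff_integrable.2 hf).toLp f
  have hcont : Continuous fun h : G => ‖F - (DomAddAct.mk h +ᵥ F)‖ :=
    (continuous_const.sub (DomAddAct.continuous_mk.vadd continuous_const)).norm
  have hnorm (h : G) : ‖F - (DomAddAct.mk h +ᵥ F)‖ = ∫ t, ‖f t - f (h + t)‖ ∂μ := by
    rw [DomAddAct.mk_vadd_toLp, ← MemLp.toLp_sub]
    exact L1.norm_of_fun_eq_integral_norm
      (hf.sub ((measurePreserving_add_left μ h).integrable_comp_of_integrable hf))
  simpa [hnorm] using hcont.tendsto 0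

end Translation

section SquareWave

variable {E : Type*} [NormedAddCommGroup E] [NormedSpace ℝ E]

/-- The square wave of frequency `c`: its values are `±1` and it is antiperiodic with antiperiod
`1 / c`. As `c → ∞` it tends to `0` in the weak-* topology of `L^∞`. -/
noncomputable def squareWave (c t : ℝ) : ℝ := (-1) ^ ⌊c * t⌋

theorem measurable_squareWave (c : ℝ) : Measurable (squareWave c) :=
  (measurable_from_top (f := fun m : ℤ => (-1 : ℝ) ^ m)).comp (by fun_prop)

theorem squareWave_eq_one_or_eq_neg_one (c t : ℝ) : squareWave c t = 1 ∨ squareWave c t = -1 := by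
  rw [squareWave, neg_one_zpow_eq_ite]
  split_ifs <;> simp

theorem norm_squareWave (c t : ℝ) : ‖squareWave c t‖ = 1 := by
  rcases squareWave_eq_one_or_eq_neg_one c t with h | h <;> simp [h]

theorem squareWave_inv_add {c : ℝ} (hc : c ≠ 0) (t : ℝ) :
    squareWave c (c⁻¹ + t) = -squareWave c t := by
  rw [squareWave, mul_add, mul_inv_cancel₀ hc, add_comm, Int.floor_add_one,
    zpow_add_one₀ (by norm_num), mul_neg_one, squareWave]

theorem integrable_squareWave_smul {f : ℝ → E} {μ : Measure ℝ} (hf : Integrable f μ) (c : ℝ) :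
    Integrable (fun t => squareWave c t • f t) μ :=
  hf.bdd_smul 1 (measurable_squareWave c).aestronglyMeasurable
    (.of_forall fun t => (norm_squareWave c t).le)

theorem two_smul_integral_squareWave_smul {f : ℝ → E} (hf : Integrable f) {c : ℝ} (hc : c ≠ 0) :
    (2 : ℝ) • ∫ t, squareWave c t • f t = ∫ t, squareWave c t • (f t - f (c⁻¹ + t)) := by
  have hshift : ∫ t, squareWave c t • f t = -∫ t, squareWave c t • f (c⁻¹ + t) := by
    rw [← integral_add_left_eq_self _ c⁻¹, ← integral_neg]
    simp only [squareWave_inv_add hc, neg_smul]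
  simp only [smul_sub]
  rw [integral_sub (integrable_squareWave_smul hf c)
    (integrable_squareWave_smul (hf.comp_add_left c⁻¹) c), two_smul]
  nth_rw 2 [hshift]
  rw [sub_eq_add_neg]

theorem tendsto_integral_squareWave_smul {f : ℝ → E} (hf : Integrable f) :
    Tendsto (fun c => ∫ t, squareWave c t • f t) atTop (𝓝 0) := by
  have htwo : Tendsto (fun c => (2 : ℝ) • ∫ t, squareWave c t • f t) atTop (𝓝 0) := by
    refine squeeze_zero_norm' ?_
      ((tendsto_integral_norm_sub_comp_add_left hf).comp tendsto_inv_atTop_zero)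
    filter_upwards [eventually_ne_atTop 0] with c hc
    rw [two_smul_integral_squareWave_smul hf hc]
    refine (norm_integral_le_integral_norm _).trans_eq ?_
    simp only [norm_smul, norm_squareWave, one_mul, Function.comp_apply]
  simpa [smul_smul] using htwo.const_smul (2⁻¹ : ℝ)

theorem tendsto_setIntegral_squareWave_smul {f : ℝ → E} {S : Set ℝ} (hS : MeasurableSet S)
    (hf : IntegrableOn f S) :
    Tendsto (fun c => ∫ t in S, squareWave c t • f t) atTop (𝓝 0) := by
  refine (tendsto_integral_squareWave_smul (hf.integrable_indicator hS)).congr fun c => ?_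
  rw [← integral_indicator hS]
  simp only [indicator_smul]

theorem tendsto_setIntegral_squareWave_smul_of_dominated {F : ℝ → ℝ → E} {f : ℝ → E} {g : ℝ → ℝ}
    {S : Set ℝ} (hS : MeasurableSet S)
    (hF : ∀ c, AEStronglyMeasurable (F c) (volume.restrict S)) (hg : IntegrableOn g S)
    (hFg : ∀ c, ∀ᵐ t ∂volume.restrict S, ‖F c t‖ ≤ g t)
    (hlim : ∀ᵐ t ∂volume.restrict S, Tendsto (fun c => F c t) atTop (𝓝 (f t))) :
    Tendsto (fun c => ∫ t in S, squareWave c t • F c t) atTop (𝓝 0) := by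
  have hFg' : ∀ᵐ t ∂volume.restrict S, ‖f t‖ ≤ g t := by
    filter_upwards [hlim, ae_all_iff.2 fun k : ℕ => hFg k] with t ht hbound
    exact le_of_tendsto (ht.comp tendsto_natCast_atTop_atTop).norm (.of_forall hbound)
  have hf_meas : AEStronglyMeasurable f (volume.restrict S) :=
    aestronglyMeasurable_of_tendsto_ae _ hF hlim
  have hf : IntegrableOn f S := hg.mono' hf_meas hFg'
  have hdiff : Tendsto (fun c => ∫ t in S, squareWave c t • (F c t - f t)) atTop (𝓝 0) := by
    rw [← integral_zero ℝ E (μ := volume.restrict S)]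
    refine tendsto_integral_filter_of_dominated_convergence (fun t => g t + g t)
      (.of_forall fun c => (measurable_squareWave c).aestronglyMeasurable.smul
        ((hF c).sub hf_meas)) (.of_forall fun c => ?_) (hg.add hg) ?_
    · filter_upwards [hFg c, hFg'] with t hFt hft
      rw [norm_smul, norm_squareWave, one_mul]
      exact (norm_sub_le _ _).trans (add_le_add hFt hft)
    · filter_upwards [hlim] with t ht
      refine squeeze_zero_norm (fun c => ?_) (tendsto_iff_norm_sub_tendsto_zero.1 ht)
      rw [norm_smul, norm_squareWave, one_mul]
  have hsplit (c : ℝ) : ∫ t in S, squareWave c t • (F c t - f t) =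
      (∫ t in S, squareWave c t • F c t) - ∫ t in S, squareWave c t • f t := by
    simp only [smul_sub]
    exact integral_sub (integrable_squareWave_smul (hg.mono' (hF c) (hFg c)) c)
      (integrable_squareWave_smul hf c)
  simpa [hsplit] using hdiff.add (tendsto_setIntegral_squareWave_smul hS hf)

theorem tendsto_setIntegral_comp_squareWave_of_dominated {F : ℝ → ℝ → ℝ → E} {f : ℝ → ℝ → E}
    {g : ℝ → ℝ} {S : Set ℝ} (hS : MeasurableSet S)
    (hF : ∀ c σ, AEStronglyMeasurable (F c σ) (volume.restrict S)) (hg : IntegrableOn g S)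
    (hFg : ∀ c σ, ‖σ‖ = 1 → ∀ᵐ t ∂volume.restrict S, ‖F c σ t‖ ≤ g t)
    (hlim : ∀ σ, ∀ᵐ t ∂volume.restrict S, Tendsto (fun c => F c σ t) atTop (𝓝 (f σ t))) :
    Tendsto (fun c => ∫ t in S, F c (squareWave c t) t) atTop
      (𝓝 ((2⁻¹ : ℝ) • ((∫ t in S, f 1 t) + ∫ t in S, f (-1) t))) := by
  have hone : ‖(1 : ℝ)‖ = 1 := norm_one
  have hneg : ‖(-1 : ℝ)‖ = 1 := by norm_num
  have hint (c σ : ℝ) (hσ : ‖σ‖ = 1) : IntegrableOn (F c σ) S := hg.mono' (hF c σ) (hFg c σ hσ)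
  have hmean (σ : ℝ) (hσ : ‖σ‖ = 1) :
      Tendsto (fun c => ∫ t in S, F c σ t) atTop (𝓝 (∫ t in S, f σ t)) :=
    tendsto_integral_filter_of_dominated_convergence g (.of_forall (hF · σ))
      (.of_forall (hFg · σ hσ)) hg (hlim σ)
  have hosc (σ : ℝ) (hσ : ‖σ‖ = 1) :
      Tendsto (fun c => ∫ t in S, squareWave c t • F c σ t) atTop (𝓝 0) :=
    tendsto_setIntegral_squareWave_smul_of_dominated hS (hF · σ) hg (hFg · σ hσ) (hlim σ)
  have hsplit (c t : ℝ) : F c (squareWave c t) t =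
      (2⁻¹ : ℝ) • (F c 1 t + F c (-1) t +
        (squareWave c t • F c 1 t - squareWave c t • F c (-1) t)) := by
    rcases squareWave_eq_one_or_eq_neg_one c t with h | h <;> rw [h] <;> module
  have hlimit := (((hmean 1 hone).add (hmean (-1) hneg)).add
    ((hosc 1 hone).sub (hosc (-1) hneg))).const_smul (2⁻¹ : ℝ)
  rw [sub_zero, add_zero] at hlimit
  refine hlimit.congr fun c => ?_
  have hosc₁ := integrable_squareWave_smul (hint c 1 hone) c
  have hosc₂ := integrable_squareWave_smul (hint c (-1) hneg) c
  have hsum : IntegrableOn (fun t => F c 1 t + F c (-1) t) S :=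
    (hint c 1 hone).add (hint c (-1) hneg)
  have hdiff : IntegrableOn
      (fun t => squareWave c t • F c 1 t - squareWave c t • F c (-1) t) S := hosc₁.sub hosc₂
  simp only [hsplit]
  rw [integral_smul, integral_add hsum hdiff, integral_add (hint c 1 hone) (hint c (-1) hneg),
    integral_sub hosc₁ hosc₂]

theorem integrable_mul_comp_of_norm_le {α F : Type*} [MeasurableSpace α] {μ : Measure α}
    [NormedAddCommGroup F] [ProperSpace F] {w : α → ℝ} (hw : Integrable w μ) {L : F → ℝ}
    (hL : Continuous L) {z : α → F} (hz : AEStronglyMeasurable z μ) {R : ℝ}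
    (hzR : ∀ᵐ s ∂μ, ‖z s‖ ≤ R) : Integrable (fun s => w s * L (z s)) μ := by
  obtain ⟨M, hM⟩ := (isCompact_closedBall (0 : F) R).exists_bound_of_continuousOn hL.continuousOn
  refine hw.mul_bdd (hL.comp_aestronglyMeasurable hz) (c := M) ?_
  filter_upwards [hzR] with s hs using hM _ (mem_closedBall_zero_iff.2 hs)

theorem tendsto_setIntegral_mul_comp_squareWave {F : Type*} [NormedAddCommGroup F] [ProperSpace F]
    {S : Set ℝ} (hS : MeasurableSet S) {w : ℝ → ℝ} (hw : IntegrableOn w S) {L : F → ℝ}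
    (hL : Continuous L) {z : ℝ → ℝ → ℝ → F} {z' : ℝ → ℝ → F} {R : ℝ}
    (hz : ∀ c σ, AEStronglyMeasurable (z c σ) (volume.restrict S))
    (hzR : ∀ c σ, ‖σ‖ = 1 → ∀ᵐ s ∂volume.restrict S, ‖z c σ s‖ ≤ R)
    (hlim : ∀ σ, ∀ᵐ s ∂volume.restrict S, Tendsto (fun c => z c σ s) atTop (𝓝 (z' σ s))) :
    Tendsto (fun c => ∫ s in S, w s * L (z c (squareWave c s) s)) atTop
      (𝓝 (2⁻¹ * ((∫ s in S, w s * L (z' 1 s)) + ∫ s in S, w s * L (z' (-1) s)))) := by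
  obtain ⟨M, hM⟩ := (isCompact_closedBall (0 : F) R).exists_bound_of_continuousOn hL.continuousOn
  refine tendsto_setIntegral_comp_squareWave_of_dominated hS (g := fun s => ‖w s‖ * M)
    (F := fun c σ s => w s * L (z c σ s)) (f := fun σ s => w s * L (z' σ s))
    (fun c σ => hw.1.mul (hL.comp_aestronglyMeasurable (hz c σ))) (hw.norm.mul_const M) ?_ ?_
  · intro c σ hσ
    filter_upwards [hzR c σ hσ] with s hs
    rw [norm_mul]
    exact mul_le_mul_of_nonneg_left (hM _ (mem_closedBall_zero_iff.2 hs)) (norm_nonneg _)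
  · intro σ
    filter_upwards [hlim σ] with s hs using ((hL.tendsto _).comp hs).const_mul _

end SquareWave

section SecondDifference

variable {E : Type*}

/-- The symmetric second difference of `g` at `z` with increment `v`. -/
def secondDifference [AddGroup E] (g : E → ℝ) (z v : E) : ℝ := g (z + v) + g (z - v) - 2 * g z

theorem secondDifference_zero [AddGroup E] (g : E → ℝ) (z : E) : secondDifference g z 0 = 0 := by
  rw [secondDifference, add_zero, sub_zero]
  ring

theorem continuous_secondDifference [AddGroup E] [TopologicalSpace E] [IsTopologicalAddGroup E]
    {g : E → ℝ} (hg : Continuous g) (z : E) : Continuous (secondDifference g z) := by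
  unfold secondDifference
  fun_prop

theorem deriv_deriv_nonneg_of_isLocalMin {p : ℝ → ℝ} {x : ℝ} (hmin : IsLocalMin p x)
    (hp : ContinuousAt p x) : 0 ≤ deriv (deriv p) x := by
  by_contra! hneg
  have hmax : IsLocalMax p x := isLocalMax_of_deriv_deriv_neg hneg hmin.deriv_eq_zero hp
  have hconst : p =ᶠ[𝓝 x] fun _ => p x := by
    filter_upwards [hmin, hmax] with r hle hge using le_antisymm hge hle
  rw [hconst.deriv.deriv_eq] at hneg
  simp at hneg

theorem deriv_deriv_nonneg_of_secondDifference_nonneg {q : ℝ → ℝ} (hq : ContDiffAt ℝ 2 q 0)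
    (hsd : ∀ᶠ r in 𝓝 0, 0 ≤ secondDifference q 0 r) : 0 ≤ deriv (deriv q) 0 := by
  set p : ℝ → ℝ := fun r => q r + q (-r)
  have hneg : Tendsto (fun r : ℝ => -r) (𝓝 0) (𝓝 0) := by
    simpa using continuous_neg.tendsto (0 : ℝ)
  have hq_near : ∀ᶠ r in 𝓝 0, DifferentiableAt ℝ q r := by
    filter_upwards [hq.eventually (by simp)] with r hr using hr.differentiableAt (by simp)
  have hderiv : deriv p =ᶠ[𝓝 0] fun r => deriv q r - deriv q (-r) := by
    filter_upwards [hq_near, hneg.eventually hq_near] with r hr hr'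
    rw [deriv_fun_add hr (differentiableAt_comp_neg.2 hr'), deriv_comp_neg, sub_eq_add_neg]
  have hq' : DifferentiableAt ℝ (deriv q) 0 :=
    ((hq.fderiv_right (m := 1) (by norm_num)).differentiableAt (by simp)).clm_apply
      (differentiableAt_const 1)
  have hderiv2 : deriv (deriv p) 0 = 2 * deriv (deriv q) 0 := by
    have hq'_neg : DifferentiableAt ℝ (fun r => deriv q (-r)) 0 :=
      differentiableAt_comp_neg.2 (by simpa using hq')
    rw [hderiv.deriv_eq, deriv_fun_sub hq' hq'_neg, deriv_comp_neg, neg_zero]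
    ring
  have hmin : IsLocalMin p 0 := by
    filter_upwards [hsd] with r hr
    simp only [secondDifference, zero_add, zero_sub] at hr
    simp only [p, neg_zero]
    linarith
  have hcont : ContinuousAt p 0 :=
    hq.continuousAt.add (ContinuousAt.comp (by simpa using hq.continuousAt) continuousAt_neg)
  linarith [deriv_deriv_nonneg_of_isLocalMin hmin hcont]

theorem inner_fderiv_gradient_eq_deriv_deriv [NormedAddCommGroup E] [InnerProductSpace ℝ E]
    [CompleteSpace E] {g : E → ℝ} {z : E} (hg : ContDiffAt ℝ 2 g z) (v : E) :
    ⟪v, fderiv ℝ (gradient g) z v⟫ = deriv (deriv fun r : ℝ => g (z + r • v)) 0 := by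
  have hline (r : ℝ) : HasDerivAt (fun r : ℝ => z + r • v) v r := by
    simpa using ((hasDerivAt_id r).smul_const v).const_add z
  have hline_tendsto : Tendsto (fun r : ℝ => z + r • v) (𝓝 0) (𝓝 z) := by
    simpa using (hline 0).continuousAt.tendsto
  have hderiv : (deriv fun r : ℝ => g (z + r • v)) =ᶠ[𝓝 0]
      fun r => ⟪v, gradient g (z + r • v)⟫ := by
    filter_upwards [hline_tendsto.eventually (hg.eventually (by simp))] with r hr
    have hgr := (hr.differentiableAt (by simp)).hasGradientAt.hasFDerivAt
    refine (hgr.comp_hasDerivAt r (hline r)).deriv.trans ?_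
    rw [InnerProductSpace.toDual_apply_apply, real_inner_comm]
  have hgrad : DifferentiableAt ℝ (gradient g) z :=
    (InnerProductSpace.toDual ℝ E).symm.toContinuousLinearEquiv.differentiableAt.comp z
      ((hg.fderiv_right (m := 1) (by norm_num)).differentiableAt (by simp))
  have hgrad_line :
      HasDerivAt (fun r : ℝ => gradient g (z + r • v)) (fderiv ℝ (gradient g) z v) 0 := by
    have hgrad₀ : HasFDerivAt (gradient g) (fderiv ℝ (gradient g) z) (z + (0 : ℝ) • v) := by
      simpa using hgrad.hasFDerivAt
    exact hgrad₀.comp_hasDerivAt (0 : ℝ) (hline 0)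
  rw [hderiv.deriv_eq]
  simpa using ((hasDerivAt_const (0 : ℝ) v).inner ℝ hgrad_line).deriv.symm

theorem inner_fderiv_gradient_nonneg_of_secondDifference_nonneg [NormedAddCommGroup E]
    [InnerProductSpace ℝ E] [CompleteSpace E] {g : E → ℝ} {z v : E} (hg : ContDiffAt ℝ 2 g z)
    (hsd : ∀ᶠ r : ℝ in 𝓝 0, 0 ≤ secondDifference g z (r • v)) :
    0 ≤ ⟪v, fderiv ℝ (gradient g) z v⟫ := by
  rw [inner_fderiv_gradient_eq_deriv_deriv hg]
  refine deriv_deriv_nonneg_of_secondDifference_nonneg ?_ ?_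
  · exact ContDiffAt.comp (0 : ℝ) (by simpa using hg) (by fun_prop)
  · simpa [secondDifference, sub_eq_add_neg] using hsd

end SecondDifference

theorem ae_forall_of_forall_ae_of_isClosed {α X : Type*} [MeasurableSpace α] {μ : Measure α}
    [TopologicalSpace X] [TopologicalSpace.SeparableSpace X] {p : α → X → Prop}
    (hp : ∀ t, IsClosed {v | p t v}) (h : ∀ v, ∀ᵐ t ∂μ, p t v) : ∀ᵐ t ∂μ, ∀ v, p t v := by
  obtain ⟨D, hD_countable, hD_dense⟩ := TopologicalSpace.exists_countable_dense X
  filter_upwards [(ae_ball_iff hD_countable).2 fun v _ => h v] with t ht v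
  exact (hp t).closure_subset_iff.2 ht (hD_dense v)

theorem ae_norm_add_smul_le {X E : Type*} [MeasurableSpace X] {μ : Measure X}
    [SeminormedAddCommGroup E] [NormedSpace ℝ E] {u h : X → E} {ε : X → ℝ} {C D : ℝ}
    (hu : ∀ᵐ s ∂μ, ‖u s‖ ≤ C) (hh : ∀ᵐ s ∂μ, ‖h s‖ ≤ D) (hε : ∀ᵐ s ∂μ, ‖ε s‖ ≤ 1) :
    ∀ᵐ s ∂μ, ‖u s + ε s • h s‖ ≤ C + D := by
  filter_upwards [hu, hh, hε] with s hus hhs hεs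
  refine norm_add_le_of_le hus ((norm_smul_le _ _).trans ?_)
  exact (mul_le_of_le_one_left (norm_nonneg _) hεs).trans hhs

section RiemannLiouville

variable {E : Type*} [NormedAddCommGroup E] [NormedSpace ℝ E] {a α t : ℝ}

/-- The kernel of the Riemann-Liouville integral of order `α`; it is only used for `s ≤ t`, where
the base of the real power is nonnegative. -/
noncomputable def riemannLiouvilleKernel (α t s : ℝ) : ℝ := (t - s) ^ (α - 1) / Real.Gamma α

/-- The left Riemann-Liouville integral of order `α` with base point `a`, the right inverse of the
Caputo derivative of order `α`. -/
noncomputable def riemannLiouvilleIntegral (a α : ℝ) (u : ℝ → E) (t : ℝ) : E :=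
  ∫ s in a..t, riemannLiouvilleKernel α t s • u s

theorem riemannLiouvilleKernel_pos {s : ℝ} (hα : 0 < α) (hst : s < t) :
    0 < riemannLiouvilleKernel α t s :=
  div_pos (Real.rpow_pos_of_pos (sub_pos.2 hst) _) (Real.Gamma_pos_of_pos hα)

theorem riemannLiouvilleKernel_nonneg {s : ℝ} (hα : 0 < α) (hst : s ≤ t) :
    0 ≤ riemannLiouvilleKernel α t s :=
  div_nonneg (Real.rpow_nonneg (sub_nonneg.2 hst) _) (Real.Gamma_pos_of_pos hα).le

theorem intervalIntegrable_riemannLiouvilleKernel (hα : 0 < α) (a t : ℝ) :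
    IntervalIntegrable (riemannLiouvilleKernel α t) volume a t := by
  have hrpow : IntervalIntegrable (fun s : ℝ => s ^ (α - 1)) volume (t - a) (t - t) :=
    intervalIntegral.intervalIntegrable_rpow' (by linarith)
  simpa only [sub_sub_cancel] using! (hrpow.comp_sub_left t).div_const (Real.Gamma α)

theorem integrableOn_riemannLiouvilleKernel (hα : 0 < α) (hat : a ≤ t) :
    IntegrableOn (riemannLiouvilleKernel α t) (Ioc a t) :=
  (intervalIntegrable_iff_integrableOn_Ioc_of_le hat).1
    (intervalIntegrable_riemannLiouvilleKernel hα a t)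

theorem integral_riemannLiouvilleKernel (hα : 0 < α) (a t : ℝ) :
    ∫ s in a..t, riemannLiouvilleKernel α t s = (t - a) ^ α / Real.Gamma (α + 1) := by
  simp only [riemannLiouvilleKernel]
  rw [intervalIntegral.integral_div, intervalIntegral.integral_comp_sub_left (· ^ (α - 1)) t,
    integral_rpow (Or.inl (by linarith)), sub_self, sub_add_cancel, Real.zero_rpow hα.ne',
    sub_zero, Real.Gamma_add_one hα.ne', div_div]

theorem integrableOn_riemannLiouvilleKernel_smul (hα : 0 < α) (hat : a ≤ t) {u : ℝ → E}
    (hu : MemLp u ∞ (volume.restrict (Ioc a t))) :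
    IntegrableOn (fun s => riemannLiouvilleKernel α t s • u s) (Ioc a t) :=
  (integrableOn_riemannLiouvilleKernel hα hat).smul_of_top_left hu

theorem norm_riemannLiouvilleIntegral_le (hα : 0 < α) (hat : a ≤ t) {u : ℝ → E} {C : ℝ}
    (hu : ∀ᵐ s ∂volume.restrict (Ioc a t), ‖u s‖ ≤ C) :
    ‖riemannLiouvilleIntegral a α u t‖ ≤ (t - a) ^ α / Real.Gamma (α + 1) * C := by
  rw [← integral_riemannLiouvilleKernel hα, ← intervalIntegral.integral_mul_const]
  refine intervalIntegral.norm_integral_le_of_norm_le hat ?_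
    ((intervalIntegrable_riemannLiouvilleKernel hα a t).mul_const C)
  filter_upwards [(ae_restrict_iff' measurableSet_Ioc).1 hu] with s hs hmem
  have hnonneg := riemannLiouvilleKernel_nonneg hα hmem.2
  rw [norm_smul, Real.norm_of_nonneg hnonneg]
  exact mul_le_mul_of_nonneg_left (hs hmem) hnonneg

theorem stronglyMeasurable_riemannLiouvilleIntegral {u : ℝ → E} (hu : StronglyMeasurable u) :
    StronglyMeasurable (riemannLiouvilleIntegral a α u) := by
  have hintegrand : StronglyMeasurable fun p : ℝ × ℝ => riemannLiouvilleKernel α p.1 p.2 • u p.2 :=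
    (((measurable_fst.sub measurable_snd).pow_const _).div_const _).stronglyMeasurable.smul
      (hu.comp_measurable measurable_snd)
  have hset (l r : ℝ → ℝ) (hl : Measurable l) (hr : Measurable r) : StronglyMeasurable fun t =>
      ∫ s in Ioc (l t) (r t), riemannLiouvilleKernel α t s • u s := by
    have hmeas : MeasurableSet {p : ℝ × ℝ | p.2 ∈ Ioc (l p.1) (r p.1)} :=
      (measurableSet_lt (hl.comp measurable_fst) measurable_snd).inter
        (measurableSet_le measurable_snd (hr.comp measurable_fst))
    simp only [← integral_indicator measurableSet_Ioc]
    exact (hintegrand.indicator hmeas).integral_prod_right' (ν := volume)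
  exact (hset _ _ measurable_const measurable_id).sub (hset _ _ measurable_id measurable_const)

theorem tendsto_riemannLiouvilleIntegral_add_squareWave_smul (hα : 0 < α) (hat : a ≤ t)
    {u h : ℝ → E} (hu : MemLp u ∞ (volume.restrict (Ioc a t)))
    (hh : MemLp h ∞ (volume.restrict (Ioc a t))) :
    Tendsto (fun c => riemannLiouvilleIntegral a α (fun s => u s + squareWave c s • h s) t) atTop
      (𝓝 (riemannLiouvilleIntegral a α u t)) := by
  have hKu := integrableOn_riemannLiouvilleKernel_smul hα hat hu
  have hKh := integrableOn_riemannLiouvilleKernel_smul hα hat hh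
  have hsplit (c : ℝ) : riemannLiouvilleIntegral a α (fun s => u s + squareWave c s • h s) t =
      riemannLiouvilleIntegral a α u t +
        ∫ s in Ioc a t, squareWave c s • riemannLiouvilleKernel α t s • h s := by
    simp only [riemannLiouvilleIntegral, intervalIntegral.integral_of_le hat]
    rw [← integral_add hKu (integrable_squareWave_smul hKh c)]
    simp only [smul_add, smul_comm (squareWave c _)]
  simpa [hsplit] using (tendsto_setIntegral_squareWave_smul measurableSet_Ioc hKh).const_add
    (riemannLiouvilleIntegral a α u t)

end RiemannLiouville

section Bolza

variable {n : ℕ} {a b α β : ℝ} {u h : ℝ → EuclideanSpace ℝ (Fin n)} {y : EuclideanSpace ℝ (Fin n)}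

theorem admissible_iff : admissible n a b u ↔
    Measurable u ∧ ∃ C, ∀ᵐ s ∂volume.restrict (Ioc a b), ‖u s‖ ≤ C := by
  simp only [admissible, ← ae_restrict_iff' measurableSet_Icc,
    Measure.restrict_congr_set Ioc_ae_eq_Icc]

theorem admissible.memLp (hu : admissible n a b u) : MemLp u ∞ (volume.restrict (Ioc a b)) :=
  have ⟨hu_meas, C, hC⟩ := admissible_iff.1 hu
  memLp_top_of_bound hu_meas.aestronglyMeasurable C hC

theorem admissible.add_smul (hu : admissible n a b u) (hh : admissible n a b h) {ε : ℝ → ℝ}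
    (hε : Measurable ε) (hε_le : ∀ s, ‖ε s‖ ≤ 1) :
    admissible n a b fun s => u s + ε s • h s := by
  obtain ⟨hu_meas, C, hC⟩ := admissible_iff.1 hu
  obtain ⟨hh_meas, D, hD⟩ := admissible_iff.1 hh
  exact admissible_iff.2
    ⟨hu_meas.add (hε.smul hh_meas), C + D, ae_norm_add_smul_le hC hD (.of_forall hε_le)⟩

theorem admissible.add (hu : admissible n a b u) (hh : admissible n a b h) :
    admissible n a b fun s => u s + h s := by
  simpa using hu.add_smul hh (ε := fun _ => 1) measurable_const (by simp)

theorem admissible.sub (hu : admissible n a b u) (hh : admissible n a b h) :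
    admissible n a b fun s => u s - h s := by
  simpa [sub_eq_add_neg] using hu.add_smul hh (ε := fun _ => -1) measurable_const (by simp)

theorem admissible.indicator_const {S : Set ℝ} (hS : MeasurableSet S)
    (v : EuclideanSpace ℝ (Fin n)) :
    admissible n a b (S.indicator fun _ => v) :=
  ⟨measurable_const.indicator hS, ‖v‖, .of_forall fun _ _ => norm_indicator_le_norm_self _ _⟩

theorem measurable_traj (hu : Measurable u) : Measurable (traj n a α u y) :=
  measurable_const.add
    (stronglyMeasurable_riemannLiouvilleIntegral hu.stronglyMeasurable).measurable

theorem norm_traj_le (hα : 0 < α) {C t : ℝ} (hC : ∀ᵐ s ∂volume.restrict (Ioc a b), ‖u s‖ ≤ C)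
    (ht : t ∈ Ioc a b) :
    ‖traj n a α u y t‖ ≤ ‖y‖ + (b - a) ^ α / Real.Gamma (α + 1) * |C| := by
  have hΓ : 0 < Real.Gamma (α + 1) := Real.Gamma_pos_of_pos (by linarith)
  have hta : 0 ≤ t - a := sub_nonneg.2 ht.1.le
  have hle := norm_riemannLiouvilleIntegral_le hα ht.1.le
    (ae_restrict_of_ae_restrict_of_subset (Ioc_subset_Ioc_right ht.2) hC)
  calc ‖traj n a α u y t‖ ≤ ‖y‖ + (t - a) ^ α / Real.Gamma (α + 1) * C :=
        (norm_add_le _ _).trans (add_le_add_right hle _)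
    _ ≤ ‖y‖ + (b - a) ^ α / Real.Gamma (α + 1) * |C| := by
        refine add_le_add_right (mul_le_mul_of_nonneg ?_ (le_abs_self C)
          (div_nonneg (Real.rpow_nonneg hta α) hΓ.le) (abs_nonneg C)) _
        gcongr
        exact ht.2

theorem exists_ae_norm_traj_prod_le (hα : 0 < α) (a b C : ℝ) (y : EuclideanSpace ℝ (Fin n)) :
    ∃ R, ∀ u v : ℝ → EuclideanSpace ℝ (Fin n), (∀ᵐ s ∂volume.restrict (Ioc a b), ‖u s‖ ≤ C) →
      (∀ᵐ s ∂volume.restrict (Ioc a b), ‖v s‖ ≤ C) →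
        ∀ᵐ s ∂volume.restrict (Ioc a b), ‖(traj n a α u y s, v s, s)‖ ≤ R := by
  refine ⟨max (‖y‖ + (b - a) ^ α / Real.Gamma (α + 1) * |C|) (max C (max |a| |b|)),
    fun u v hu hv => ?_⟩
  filter_upwards [hv, ae_restrict_mem measurableSet_Ioc] with s hvs hs
  exact max_le_max (norm_traj_le hα hu hs) (max_le_max hvs (abs_le_max_abs_abs hs.1.le hs.2))

theorem tendsto_traj_add_squareWave_smul (hα : 0 < α) (hu : admissible n a b u)
    (hh : admissible n a b h) {t : ℝ} (ht : t ∈ Icc a b) :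
    Tendsto (fun c => traj n a α (fun s => u s + squareWave c s • h s) y t) atTop
      (𝓝 (traj n a α u y t)) :=
  have hle := Measure.restrict_mono (Ioc_subset_Ioc_right ht.2) (le_refl volume)
  (tendsto_riemannLiouvilleIntegral_add_squareWave_smul hα ht.1 (hu.memLp.mono_measure hle)
    (hh.memLp.mono_measure hle)).const_add y

variable {φ : EuclideanSpace ℝ (Fin n) × EuclideanSpace ℝ (Fin n) → ℝ}
  {L : EuclideanSpace ℝ (Fin n) × EuclideanSpace ℝ (Fin n) × ℝ → ℝ}

theorem bolza_eq_add_setIntegral (hab : a ≤ b) :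
    bolza n a b α β φ L u y = φ (y, traj n a α u y b) +
      ∫ s in Ioc a b, riemannLiouvilleKernel β b s * L (traj n a α u y s, u s, s) :=
  congrArg _ (intervalIntegral.integral_of_le hab)

theorem integrableOn_riemannLiouvilleKernel_mul_comp_traj (hab : a ≤ b) (hα : 0 < α) (hβ : 0 < β)
    (hL : Continuous L) (hu : admissible n a b u) {v : ℝ → EuclideanSpace ℝ (Fin n)}
    (hv : admissible n a b v) :
    IntegrableOn (fun s => riemannLiouvilleKernel β b s * L (traj n a α u y s, v s, s))
      (Ioc a b) := by
  obtain ⟨hu_meas, C, hC⟩ := admissible_iff.1 hu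
  obtain ⟨hv_meas, D, hD⟩ := admissible_iff.1 hv
  obtain ⟨R, hR⟩ := exists_ae_norm_traj_prod_le hα a b (max C D) y
  exact integrable_mul_comp_of_norm_le (integrableOn_riemannLiouvilleKernel hβ hab) hL
    ((measurable_traj hu_meas).prodMk (hv_meas.prodMk measurable_id)).aestronglyMeasurable
    (hR u v (hC.mono fun _ h => h.trans (le_max_left _ _))
      (hD.mono fun _ h => h.trans (le_max_right _ _)))

theorem tendsto_bolza_add_squareWave_smul (hab : a ≤ b) (hα : 0 < α) (hβ : 0 < β)
    (hφ : Continuous φ) (hL : Continuous L) (hu : admissible n a b u) (hh : admissible n a b h) :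
    Tendsto (fun c => bolza n a b α β φ L (fun s => u s + squareWave c s • h s) y) atTop
      (𝓝 (φ (y, traj n a α u y b) + 2⁻¹ *
        ((∫ s in Ioc a b, riemannLiouvilleKernel β b s * L (traj n a α u y s, u s + h s, s)) +
          ∫ s in Ioc a b, riemannLiouvilleKernel β b s * L (traj n a α u y s, u s - h s, s)))) := by
  obtain ⟨hu_meas, C, hC⟩ := admissible_iff.1 hu
  obtain ⟨hh_meas, D, hD⟩ := admissible_iff.1 hh
  obtain ⟨R, hR⟩ := exists_ae_norm_traj_prod_le hα a b (C + D) y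
  have hrunning := tendsto_setIntegral_mul_comp_squareWave measurableSet_Ioc
    (integrableOn_riemannLiouvilleKernel hβ hab) hL
    (z := fun c σ s => (traj n a α (fun s => u s + squareWave c s • h s) y s, u s + σ • h s, s))
    (z' := fun σ s => (traj n a α u y s, u s + σ • h s, s))
    (fun c σ => ((measurable_traj (hu_meas.add ((measurable_squareWave c).smul hh_meas))).prodMk
      ((hu_meas.add (hh_meas.const_smul σ)).prodMk measurable_id)).aestronglyMeasurable)
    (fun c σ hσ => hR _ _ (ae_norm_add_smul_le hC hD (.of_forall fun s => (norm_squareWave c s).le))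
      (ae_norm_add_smul_le hC hD (.of_forall fun _ => hσ.le)))
    (fun σ => (ae_restrict_mem measurableSet_Ioc).mono fun s hs =>
      (tendsto_traj_add_squareWave_smul hα hu hh (Ioc_subset_Icc_self hs)).prodMk_nhds
        tendsto_const_nhds)
  have hterminal : Tendsto
      (fun c => φ (y, traj n a α (fun s => u s + squareWave c s • h s) y b)) atTop
      (𝓝 (φ (y, traj n a α u y b))) :=
    (hφ.tendsto _).comp (tendsto_const_nhds.prodMk_nhds
      (tendsto_traj_add_squareWave_smul hα hu hh (right_mem_Icc.2 hab)))
  simpa [bolza_eq_add_setIntegral hab, sub_eq_add_neg] using hterminal.add hrunning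

theorem integrableOn_riemannLiouvilleKernel_mul_secondDifference (hab : a ≤ b) (hα : 0 < α)
    (hβ : 0 < β) (hL : Continuous L) (hu : admissible n a b u) (hh : admissible n a b h) :
    IntegrableOn (fun s => riemannLiouvilleKernel β b s *
      secondDifference (fun z => L (traj n a α u y s, z, s)) (u s) (h s)) (Ioc a b) := by
  have hint {v : ℝ → EuclideanSpace ℝ (Fin n)} (hv : admissible n a b v) :=
    integrableOn_riemannLiouvilleKernel_mul_comp_traj (y := y) hab hα hβ hL hu hv
  simp only [secondDifference, mul_add, mul_sub, mul_left_comm _ (2 : ℝ)]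
  exact ((hint (hu.add hh)).add (hint (hu.sub hh))).sub ((hint hu).const_mul 2)

theorem integral_riemannLiouvilleKernel_mul_secondDifference (hab : a ≤ b) (hα : 0 < α)
    (hβ : 0 < β) (hL : Continuous L) (hu : admissible n a b u) (hh : admissible n a b h) :
    ∫ s in Ioc a b, riemannLiouvilleKernel β b s *
        secondDifference (fun z => L (traj n a α u y s, z, s)) (u s) (h s) =
      (∫ s in Ioc a b, riemannLiouvilleKernel β b s * L (traj n a α u y s, u s + h s, s)) +
        (∫ s in Ioc a b, riemannLiouvilleKernel β b s * L (traj n a α u y s, u s - h s, s)) -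
        2 * ∫ s in Ioc a b, riemannLiouvilleKernel β b s * L (traj n a α u y s, u s, s) := by
  have hint {v : ℝ → EuclideanSpace ℝ (Fin n)} (hv : admissible n a b v) :=
    integrableOn_riemannLiouvilleKernel_mul_comp_traj (y := y) hab hα hβ hL hu hv
  simp only [secondDifference, mul_add, mul_sub, mul_left_comm _ (2 : ℝ)]
  rw [← integral_add (hint (hu.add hh)) (hint (hu.sub hh)), ← integral_const_mul]
  exact integral_sub ((hint (hu.add hh)).add (hint (hu.sub hh))) ((hint hu).const_mul 2)

theorem integral_riemannLiouvilleKernel_mul_secondDifference_nonneg (hab : a ≤ b) (hα : 0 < α)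
    (hβ : 0 < β) (hφ : Continuous φ) (hL : Continuous L) (hu : admissible n a b u)
    (hmin : ∀ u', admissible n a b u' → bolza n a b α β φ L u y ≤ bolza n a b α β φ L u' y)
    (hh : admissible n a b h) :
    0 ≤ ∫ s in Ioc a b, riemannLiouvilleKernel β b s *
      secondDifference (fun z => L (traj n a α u y s, z, s)) (u s) (h s) := by
  have hle := ge_of_tendsto' (tendsto_bolza_add_squareWave_smul (y := y) hab hα hβ hφ hL hu hh)
    fun c => hmin _ (hu.add_smul hh (measurable_squareWave c) fun s => (norm_squareWave c s).le)
  rw [bolza_eq_add_setIntegral hab] at hle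
  rw [integral_riemannLiouvilleKernel_mul_secondDifference hab hα hβ hL hu hh]
  linarith

theorem ae_riemannLiouvilleKernel_mul_secondDifference_nonneg (hab : a ≤ b) (hα : 0 < α)
    (hβ : 0 < β) (hφ : Continuous φ) (hL : Continuous L) (hu : admissible n a b u)
    (hmin : ∀ u', admissible n a b u' → bolza n a b α β φ L u y ≤ bolza n a b α β φ L u' y)
    (v : EuclideanSpace ℝ (Fin n)) :
    ∀ᵐ t ∂volume.restrict (Ioc a b), 0 ≤ riemannLiouvilleKernel β b t *
      secondDifference (fun z => L (traj n a α u y t, z, t)) (u t) v := by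
  have hconst : admissible n a b fun _ => v := by
    simpa using admissible.indicator_const MeasurableSet.univ v
  refine ae_nonneg_of_forall_setIntegral_nonneg
    (integrableOn_riemannLiouvilleKernel_mul_secondDifference hab hα hβ hL hu hconst)
    fun S hS _ => ?_
  have hloc := integral_riemannLiouvilleKernel_mul_secondDifference_nonneg hab hα hβ hφ hL hu hmin
    (admissible.indicator_const hS v)
  rw [← integral_indicator hS]
  refine hloc.trans_eq (integral_congr_ae (.of_forall fun s => ?_))
  by_cases hs : s ∈ S <;> simp [hs, secondDifference_zero]

theorem ae_forall_secondDifference_nonneg (hab : a ≤ b) (hα : 0 < α)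
    (hβ : 0 < β) (hφ : Continuous φ) (hL : Continuous L) (hu : admissible n a b u)
    (hmin : ∀ u', admissible n a b u' → bolza n a b α β φ L u y ≤ bolza n a b α β φ L u' y) :
    ∀ᵐ t ∂volume.restrict (Ioo a b), ∀ v,
      0 ≤ secondDifference (fun z => L (traj n a α u y t, z, t)) (u t) v := by
  refine ae_forall_of_forall_ae_of_isClosed (fun t => isClosed_Ici.preimage
    (continuous_secondDifference (by fun_prop) _)) fun v => ?_
  have hweighted :=
    ae_riemannLiouvilleKernel_mul_secondDifference_nonneg hab hα hβ hφ hL hu hmin v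
  filter_upwards [ae_restrict_of_ae_restrict_of_subset Ioo_subset_Ioc_self hweighted,
    ae_restrict_mem measurableSet_Ioo] with t hnonneg ht
  exact nonneg_of_mul_nonneg_right hnonneg (riemannLiouvilleKernel_pos hβ ht.2)

end Bolza

theorem stmt_8_general {n : ℕ} {a b α β : ℝ} (hab : a ≤ b) (hα : 0 < α) (hβ : 0 < β)
    {φ : EuclideanSpace ℝ (Fin n) × EuclideanSpace ℝ (Fin n) → ℝ}
    {L : EuclideanSpace ℝ (Fin n) × EuclideanSpace ℝ (Fin n) × ℝ → ℝ}
    (hφ : Continuous φ) (hL : Continuous L) (hL₂ : ∀ x t, ContDiff ℝ 2 fun z => L (x, z, t))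
    {u : ℝ → EuclideanSpace ℝ (Fin n)} {y : EuclideanSpace ℝ (Fin n)}
    (hadm : admissible n a b u)
    (hmin : ∀ u', admissible n a b u' → bolza n a b α β φ L u y ≤ bolza n a b α β φ L u' y) :
    ∀ᵐ t ∂volume.restrict (Icc a b), ∀ v : EuclideanSpace ℝ (Fin n),
      0 ≤ ((b - t) ^ (β - 1) / Real.Gamma β) *
        ⟪v, (fderiv ℝ (fun z => gradient (fun z' => L (traj n a α u y t, z', t)) z) (u t)) v⟫ := by
  rw [← Measure.restrict_congr_set Ioo_ae_eq_Icc]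
  filter_upwards [ae_forall_secondDifference_nonneg hab hα hβ hφ hL hadm hmin,
    ae_restrict_mem measurableSet_Ioo] with t hsd ht v
  exact mul_nonneg (riemannLiouvilleKernel_pos hβ ht.2).le
    (inner_fderiv_gradient_nonneg_of_secondDifference_nonneg (hL₂ _ t).contDiffAt
      (.of_forall fun r => hsd (r • v)))

theorem stmt_8 (n : ℕ) (hn : 1 ≤ n) (a b : ℝ) (hab : a < b)
    (α β : ℝ) (hα0 : 0 < α) (hα1 : α ≤ 1) (hβ : 0 < β)
    (φ : EuclideanSpace ℝ (Fin n) × EuclideanSpace ℝ (Fin n) → ℝ)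
    (L : EuclideanSpace ℝ (Fin n) × EuclideanSpace ℝ (Fin n) × ℝ → ℝ)
    (hφ : ContDiff ℝ 2 φ) (hL : ContDiff ℝ 2 L)
    (u : ℝ → EuclideanSpace ℝ (Fin n)) (y : EuclideanSpace ℝ (Fin n))
    (hadm : admissible n a b u)
    (hmin : ∀ u' : ℝ → EuclideanSpace ℝ (Fin n), ∀ y' : EuclideanSpace ℝ (Fin n),
      admissible n a b u' → bolza n a b α β φ L u y ≤ bolza n a b α β φ L u' y') :
    ∀ᵐ t ∂(volume.restrict (Icc a b)), ∀ v : EuclideanSpace ℝ (Fin n),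
      0 ≤ ((b - t) ^ (β - 1) / Real.Gamma β) *
        ⟪v, (fderiv ℝ (fun z => gradient (fun z' => L (traj n a α u y t, z', t)) z) (u t)) v⟫ := by
  exact stmt_8_general hab.le hα0 hβ hφ.continuous hL.continuous
    (fun _ _ => hL.comp (by fun_prop)) hadm fun u' hu' => hmin u' y hu'
end
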